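/- Let B be a finite set of nonzero generalized polynomial functions on (0,∞)², and let 0 = γ_0 < γ_1 < … < γ_L < γ_{L+1} = ∞ be as in the projection lemma for B, and fix p ∈ {0,…,L}. Then there exist s(p) ∈ ℕ and continuous, monotonic, generalized semialgebraic functions ξ^{p,1}, …, ξ^{p,s(p)} : (γ_p, γ_{p+1}) → (0,∞) with 0 =: ξ^{p,0}(x) < ξ^{p,1}(x) < … < ξ^{p,s(p)}(x) < ξ^{p,s(p)+1}(x) := ∞ for each x ∈ (γ_p,γ_{p+1}), whose graphs together constitute the union of the zero sets in H_p := (γ_p,γ_{p+1}) × (0,∞) of all a ∈ B. Consequently, the cells D_{p,k} := {(x,y) : γ_p < x < γ_{p+1}, ξ^{p,k}(x) < y < ξ^{p,k+1}(x)}, for k ∈ {0,…,s(p)}, are nonempty, pairwise disjoint, open, pathwise connected, generalized semialgebraic sets whose union is a dense open subset of H_p; and they are stacked in the y-direction: for any x ∈ (γ_p,γ_{p+1}) and any points (x,y_k) ∈ D_{p,k} for k = 0,…,s(p), one has y_0 < y_1 < … < y_{s(p)}. -/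

import Mathlib

open Set

noncomputable section

/-- A one-variable generalized polynomial function (on `(0,∞)`):
`x ↦ ∑ cᵢ x^{αᵢ}` with nonzero real coefficients and distinct real exponents. -/
def IsGenPoly1 (f : ℝ → ℝ) : Prop :=
  ∃ (m : ℕ) (c : Fin m → ℝ) (α : Fin m → ℝ),
    (∀ i, c i ≠ 0) ∧ Function.Injective α ∧
    ∀ x : ℝ, 0 < x → f x = ∑ i, c i * x ^ α i

/-- A generalized polynomial function of two variables (values prescribed on the
open positive quadrant): `(x,y) ↦ ∑ cᵢ x^{αᵢ₁} y^{αᵢ₂}` with nonzero real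
coefficients and distinct real exponent pairs. -/
def IsGenPoly2 (a : ℝ → ℝ → ℝ) : Prop :=
  ∃ (m : ℕ) (c : Fin m → ℝ) (α : Fin m → ℝ × ℝ),
    (∀ i, c i ≠ 0) ∧ Function.Injective α ∧
    ∀ x y : ℝ, 0 < x → 0 < y → a x y = ∑ i, c i * x ^ (α i).1 * y ^ (α i).2

/-- A basic generalized semialgebraic (semisignomial) subset of `(0,∞)²`. -/
def IsBasicGSA2 (S : Set (ℝ × ℝ)) : Prop :=
  ∃ (f : ℝ → ℝ → ℝ) (K : ℕ) (g : Fin K → ℝ → ℝ → ℝ),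
    IsGenPoly2 f ∧ (∀ k, IsGenPoly2 (g k)) ∧
    S = {q : ℝ × ℝ | 0 < q.1 ∧ 0 < q.2 ∧ f q.1 q.2 = 0 ∧ ∀ k, 0 < g k q.1 q.2}

/-- A generalized semialgebraic subset of `(0,∞)²`: a finite union of basic ones. -/
def IsGSA2 (S : Set (ℝ × ℝ)) : Prop :=
  ∃ (J : ℕ) (T : Fin J → Set (ℝ × ℝ)), (∀ j, IsBasicGSA2 (T j)) ∧ S = ⋃ j, T j

/-- The `p`-th interval of the subdivision `0 = γ 0 < γ 1 < … < γ L < γ (L+1) = ∞`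
of `(0,∞)`: it is `(γ p, γ (p+1))` for `p < L` and `(γ L, ∞)` for `p = L`. -/
def vstrip (γ : ℕ → ℝ) (L p : ℕ) : Set ℝ :=
  if p = L then Set.Ioi (γ p) else Set.Ioo (γ p) (γ (p + 1))

/-!
Any two of the root functions are comparable over the whole strip, so their order at a single point
of the strip is their order everywhere. The topology of the cells is then that of the region
between two continuous graphs, and what remains is to see that `{(x, y) | y < ξ x}` and
`{(x, y) | ξ x < y}` are generalized semialgebraic for a root function `ξ` of a generalized
polynomial `f`.

Apply `y ∂/∂y - b` repeatedly to `f`, each time killing one exponent `b` of `y`. By Thom's lemma,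
whether `y < ξ x` can be read off from the signs at `(x, y)` and at `(x, ξ x)` of the finitely many
generalized polynomials `g` so obtained. It therefore suffices that each set
`{x | sign (g (x, ξ x)) = σ}` is a finite union of points and intervals, and by compactness this
only requires the sign of `g (x, ξ x)` to be eventually constant as `x` tends, from one side, to a
point of `[0, ∞)` or to `∞`.

Let `t → 0⁺` be a local parameter there. An edge of the Newton polygon of `f` provides `l` such that
`ζ = ξ * t ^ (-l)` converges to some `z₀ > 0`. So `ζ - z₀` is a small root of an equation whose
coefficients are convergent generalized power series in `t` with well-partially-ordered exponents.
Weierstrass division makes `g (x, ξ x)`, up to a power of `t`, an element of a finite module over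
the ring of such series, and by Cayley–Hamilton it is a root of a monic polynomial over that ring.
Nonzero elements of the ring have no zeros near `0⁺`, hence the same holds for a function satisfying
such a polynomial unless it vanishes near `0⁺`.
-/

open Filter Topology
open scoped lp

namespace GenPoly

section L1

variable {ι κ M X : Type*} [NormedAddCommGroup X] [NormedSpace ℝ X]

lemma summable_norm_l1 (f : ℓ¹(ι, ℝ)) : Summable fun i ↦ ‖f i‖ := by
  simpa using (lp.memℓp f).summable (by norm_num)

lemma norm_l1_eq_tsum (f : ℓ¹(ι, ℝ)) : ‖f‖ = ∑' i, ‖f i‖ := by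
  simpa using lp.norm_eq_tsum_rpow (p := 1) (by norm_num) f

lemma summable_norm_l1_smul {v : ι → X} {C : ℝ} (hv : ∀ i, ‖v i‖ ≤ C) (f : ℓ¹(ι, ℝ)) :
    Summable fun i ↦ ‖f i • v i‖ := by
  refine .of_nonneg_of_le (fun _ ↦ norm_nonneg _) (fun i ↦ ?_) ((summable_norm_l1 f).mul_right C)
  rw [norm_smul]
  gcongr
  exact hv i

/-- The continuous linear map `f ↦ ∑ f i • v i` on `ℓ¹` attached to a bounded family `v`: the
universal property of `ℓ¹(ι, ℝ)` as the free Banach space on `ι`. -/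
def l1Lift [CompleteSpace X] (v : ι → X) (C : ℝ) (hv : ∀ i, ‖v i‖ ≤ C) : ℓ¹(ι, ℝ) →L[ℝ] X :=
  LinearMap.mkContinuous
    { toFun := fun f ↦ ∑' i, f i • v i
      map_add' := fun f g ↦ by
        rw [← (summable_norm_l1_smul hv f).of_norm.tsum_add (summable_norm_l1_smul hv g).of_norm]
        simp [add_smul]
      map_smul' := fun c f ↦ by
        rw [RingHom.id_apply, ← (summable_norm_l1_smul hv f).of_norm.tsum_const_smul c]
        simp [mul_smul] }
    C fun f ↦ by
      refine (norm_tsum_le_tsum_norm (summable_norm_l1_smul hv f)).trans ?_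
      rw [norm_l1_eq_tsum, ← tsum_mul_left]
      refine (summable_norm_l1_smul hv f).tsum_le_tsum (fun i ↦ ?_)
        ((summable_norm_l1 f).mul_left C)
      rw [norm_smul, mul_comm]
      gcongr
      exact hv i

lemma l1Lift_apply [CompleteSpace X] (v : ι → X) (C : ℝ) (hv : ∀ i, ‖v i‖ ≤ C) (f : ℓ¹(ι, ℝ)) :
    l1Lift v C hv f = ∑' i, f i • v i := rfl

lemma norm_l1Lift_le [CompleteSpace X] (v : ι → X) {C : ℝ} (hC : 0 ≤ C) (hv : ∀ i, ‖v i‖ ≤ C) :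
    ‖l1Lift v C hv‖ ≤ C :=
  LinearMap.mkContinuous_norm_le _ hC _

lemma norm_l1_single [DecidableEq ι] (i : ι) : ‖(lp.single 1 i 1 : ℓ¹(ι, ℝ))‖ = 1 := by
  rw [lp.norm_single (by norm_num), norm_one]

lemma l1Lift_single [CompleteSpace X] [DecidableEq ι] (v : ι → X) (C : ℝ)
    (hv : ∀ i, ‖v i‖ ≤ C) (i : ι) : l1Lift v C hv (lp.single 1 i 1) = v i := by
  rw [l1Lift_apply, tsum_eq_single i fun j hj ↦ by simp [hj]]
  simp

lemma l1_clm_ext [DecidableEq ι] {A B : ℓ¹(ι, ℝ) →L[ℝ] X}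
    (h : ∀ i, A (lp.single 1 i 1) = B (lp.single 1 i 1)) : A = B :=
  lp.ext_continuousLinearMap ENNReal.one_ne_top fun i ↦
    ContinuousLinearMap.ext_ring (by simpa using h i)

/-- The pairing `∑ f i * χ i` of `f ∈ ℓ¹` with a function `χ`. For `χ i = t ^ i` it evaluates the
power series with coefficients `f` at `t`. -/
def l1Pairing (χ : ι → ℝ) (f : ℓ¹(ι, ℝ)) : ℝ := ∑' i, f i * χ i

lemma l1Pairing_eq_l1Lift {χ : ι → ℝ} (hχ : ∀ i, ‖χ i‖ ≤ 1) (f : ℓ¹(ι, ℝ)) :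
    l1Pairing χ f = l1Lift χ 1 hχ f := rfl

lemma l1Pairing_single [DecidableEq ι] (χ : ι → ℝ) (i : ι) :
    l1Pairing χ (lp.single 1 i 1) = χ i := by
  rw [l1Pairing, tsum_eq_single i fun j hj ↦ by simp [hj]]
  simp

/-- Convolution by `w` on `ℓ¹(M, ℝ)`, the Banach completion of the monoid algebra of `M`. -/
def l1Conv [AddCommMonoid M] [DecidableEq M] (w : ℓ¹(M, ℝ)) : ℓ¹(M, ℝ) →L[ℝ] ℓ¹(M, ℝ) :=
  l1Lift (fun m ↦ l1Lift (fun k ↦ lp.single 1 (k + m) 1) 1 (fun _ ↦ (norm_l1_single _).le) w) ‖w‖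
    fun m ↦ by simpa using ContinuousLinearMap.le_of_opNorm_le _ (norm_l1Lift_le _ zero_le_one _) w

lemma norm_l1Conv_le [AddCommMonoid M] [DecidableEq M] (w : ℓ¹(M, ℝ)) : ‖l1Conv w‖ ≤ ‖w‖ :=
  norm_l1Lift_le _ (norm_nonneg _) _

lemma l1Pairing_l1Conv [AddCommMonoid M] [DecidableEq M] {χ : M → ℝ} (hχ : ∀ i, ‖χ i‖ ≤ 1)
    (hadd : ∀ k m, χ (k + m) = χ k * χ m) (w f : ℓ¹(M, ℝ)) :
    l1Pairing χ (l1Conv w f) = l1Pairing χ w * l1Pairing χ f := by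
  have shift (m : M) : (l1Lift χ 1 hχ).comp
      (l1Lift (fun k ↦ lp.single 1 (k + m) 1) 1 fun _ ↦ (norm_l1_single _).le) =
        χ m • l1Lift χ 1 hχ :=
    l1_clm_ext fun k ↦ by simp [l1Lift_single, hadd, mul_comm]
  have conv : (l1Lift χ 1 hχ).comp (l1Conv w) = l1Lift χ 1 hχ w • l1Lift χ 1 hχ :=
    l1_clm_ext fun m ↦ by
      simpa [l1Conv, l1Lift_single, mul_comm] using congr($(shift m) w)
  exact congr($conv f)

/-- The tensor product `(i, j) ↦ a i * b j` of two elements of `ℓ¹`. -/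
def l1Tensor (a : ℓ¹(ι, ℝ)) (b : ℓ¹(κ, ℝ)) : ℓ¹(ι × κ, ℝ) :=
  ⟨fun i ↦ a i.1 * b i.2, memℓp_gen <| by
    simpa using (summable_norm_l1 a).mul_norm (summable_norm_l1 b)⟩

lemma l1Tensor_apply (a : ℓ¹(ι, ℝ)) (b : ℓ¹(κ, ℝ)) (i : ι × κ) :
    l1Tensor a b i = a i.1 * b i.2 := rfl

lemma norm_l1Tensor (a : ℓ¹(ι, ℝ)) (b : ℓ¹(κ, ℝ)) : ‖l1Tensor a b‖ = ‖a‖ * ‖b‖ := by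
  simp only [norm_l1_eq_tsum, l1Tensor_apply, norm_mul]
  exact ((summable_norm_l1 a).tsum_mul_tsum (summable_norm_l1 b) <|
    (summable_norm_l1 a).mul_of_nonneg (summable_norm_l1 b) (fun _ ↦ norm_nonneg _)
      fun _ ↦ norm_nonneg _).symm

lemma l1Pairing_l1Tensor {χ : ι → ℝ} {χ' : κ → ℝ} (hχ : ∀ i, ‖χ i‖ ≤ 1) (hχ' : ∀ j, ‖χ' j‖ ≤ 1)
    (a : ℓ¹(ι, ℝ)) (b : ℓ¹(κ, ℝ)) :
    l1Pairing (fun i ↦ χ i.1 * χ' i.2) (l1Tensor a b) = l1Pairing χ a * l1Pairing χ' b := by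
  refine Eq.trans (tsum_congr fun i ↦ ?_) (tsum_mul_tsum_of_summable_norm
    (summable_norm_l1_smul hχ a) (summable_norm_l1_smul hχ' b)).symm
  simp [l1Tensor_apply, mul_mul_mul_comm]

end L1

section WeierstrassDivision

variable {Γ : AddSubmonoid ℝ} {t ζ : ℝ}

/-- The sum `∑ f γ * t ^ γ` of the generalized power series with coefficients `f`. -/
def gpsEval (t : ℝ) (f : ℓ¹(Γ, ℝ)) : ℝ := l1Pairing (fun γ : Γ ↦ t ^ (γ : ℝ)) f

/-- The sum `∑ f (γ, n) * t ^ γ * ζ ^ n` of the series with coefficients `f`, whose exponents are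
real in `t` and natural in `ζ`. -/
def gpsEval₂ (t ζ : ℝ) (f : ℓ¹(Γ × ℕ, ℝ)) : ℝ :=
  l1Pairing (fun i : Γ × ℕ ↦ t ^ (i.1 : ℝ) * ζ ^ i.2) f

lemma gpsEval₂_smul (k : ℝ) (f : ℓ¹(Γ × ℕ, ℝ)) : gpsEval₂ t ζ (k • f) = k * gpsEval₂ t ζ f := by
  simp only [gpsEval₂, l1Pairing, ← tsum_mul_left]
  exact tsum_congr fun i ↦ by simp [mul_assoc]

lemma norm_rpow_le_one (hΓ : ∀ e ∈ Γ, 0 ≤ e) (ht : t ∈ Ioo (0 : ℝ) 1) (γ : Γ) :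
    ‖t ^ (γ : ℝ)‖ ≤ 1 := by
  rw [Real.norm_of_nonneg (Real.rpow_nonneg ht.1.le _)]
  exact Real.rpow_le_one ht.1.le ht.2.le (hΓ γ γ.2)

lemma norm_pow_le_one (hζ : |ζ| ≤ 1) (n : ℕ) : ‖ζ ^ n‖ ≤ 1 := by
  rw [norm_pow]
  exact pow_le_one₀ (norm_nonneg _) hζ

lemma norm_rpow_mul_pow_le_one (hΓ : ∀ e ∈ Γ, 0 ≤ e) (ht : t ∈ Ioo (0 : ℝ) 1) (hζ : |ζ| ≤ 1)
    (i : Γ × ℕ) : ‖t ^ (i.1 : ℝ) * ζ ^ i.2‖ ≤ 1 := by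
  rw [norm_mul]
  exact mul_le_one₀ (norm_rpow_le_one hΓ ht i.1) (norm_nonneg _) (norm_pow_le_one hζ i.2)

lemma gpsEval_l1Conv (hΓ : ∀ e ∈ Γ, 0 ≤ e) (ht : t ∈ Ioo (0 : ℝ) 1) (f g : ℓ¹(Γ, ℝ)) :
    gpsEval t (l1Conv f g) = gpsEval t f * gpsEval t g :=
  l1Pairing_l1Conv (norm_rpow_le_one hΓ ht) (fun k m ↦ by simp [Real.rpow_add ht.1]) f g

lemma gpsEval₂_l1Conv (hΓ : ∀ e ∈ Γ, 0 ≤ e) (ht : t ∈ Ioo (0 : ℝ) 1) (hζ : |ζ| ≤ 1)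
    (f g : ℓ¹(Γ × ℕ, ℝ)) : gpsEval₂ t ζ (l1Conv f g) = gpsEval₂ t ζ f * gpsEval₂ t ζ g :=
  l1Pairing_l1Conv (norm_rpow_mul_pow_le_one hΓ ht hζ)
    (fun k m ↦ by simp [Real.rpow_add ht.1, pow_add, mul_mul_mul_comm]) f g

/-- Quotient on division by `ζ ^ d`: the operator sending `t ^ γ * ζ ^ (n + d)` to `t ^ γ * ζ ^ n`
and killing the monomials of lower degree in `ζ`. -/
def divPow (Γ : AddSubmonoid ℝ) (d : ℕ) : ℓ¹(Γ × ℕ, ℝ) →L[ℝ] ℓ¹(Γ × ℕ, ℝ) :=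
  l1Lift (fun i ↦ if d ≤ i.2 then lp.single 1 (i.1, i.2 - d) 1 else 0) 1 fun i ↦ by
    split_ifs
    · exact (norm_l1_single _).le
    · simp

/-- The coefficient of `ζ ^ j`, as a generalized power series in `t`. -/
def coeffPow (Γ : AddSubmonoid ℝ) (j : ℕ) : ℓ¹(Γ × ℕ, ℝ) →L[ℝ] ℓ¹(Γ, ℝ) :=
  l1Lift (fun i ↦ if i.2 = j then lp.single 1 i.1 1 else 0) 1 fun i ↦ by
    split_ifs
    · exact (norm_l1_single _).le
    · simp

lemma gpsEval₂_eq_pow_mul_add_sum (hΓ : ∀ e ∈ Γ, 0 ≤ e) (ht : t ∈ Ioo (0 : ℝ) 1) (hζ : |ζ| ≤ 1)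
    (d : ℕ) (f : ℓ¹(Γ × ℕ, ℝ)) :
    gpsEval₂ t ζ f = ζ ^ d * gpsEval₂ t ζ (divPow Γ d f) +
      ∑ j ∈ Finset.range d, ζ ^ j * gpsEval t (coeffPow Γ j f) := by
  set E₂ := l1Lift _ 1 (norm_rpow_mul_pow_le_one hΓ ht hζ)
  set E := l1Lift _ 1 (norm_rpow_le_one hΓ ht)
  have key : E₂ = ζ ^ d • E₂.comp (divPow Γ d) +
      ∑ j ∈ Finset.range d, ζ ^ j • E.comp (coeffPow Γ j) := by
    refine l1_clm_ext fun ⟨γ, n⟩ ↦ ?_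
    simp only [E, E₂, divPow, coeffPow, _root_.add_apply, _root_.smul_apply, _root_.sum_apply,
      ContinuousLinearMap.comp_apply, l1Lift_single, apply_ite, map_zero, smul_eq_mul,
      mul_zero, Finset.sum_ite_eq, Finset.mem_range]
    rcases le_or_gt d n with h | h
    · simp [h, h.not_gt, mul_left_comm (ζ ^ d), pow_mul_pow_sub]
    · simp [h, h.not_ge, mul_comm]
  have := congr($key f)
  simp only [_root_.add_apply, _root_.smul_apply, _root_.sum_apply] at this
  exact this

theorem exists_eq_mul_add_sum (hΓ : ∀ e ∈ Γ, 0 ≤ e) {w : ℓ¹(Γ × ℕ, ℝ)} (hw : ‖w‖ < 1) (d : ℕ)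
    (f : ℓ¹(Γ × ℕ, ℝ)) : ∃ (q : ℓ¹(Γ × ℕ, ℝ)) (r : ℕ → ℓ¹(Γ, ℝ)),
      ∀ t ∈ Ioo (0 : ℝ) 1, ∀ ζ : ℝ, |ζ| ≤ 1 →
        gpsEval₂ t ζ f = gpsEval₂ t ζ q * (ζ ^ d + gpsEval₂ t ζ w) +
          ∑ j ∈ Finset.range d, ζ ^ j * gpsEval t (r j) := by
  -- The quotient solves `q = divPow d (f - w * q)`, a contraction since `‖w‖ < 1`.
  obtain ⟨q, hq⟩ : ∃ q, divPow Γ d (f - l1Conv w q) = q := by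
    set A := -((divPow Γ d).comp (l1Conv w))
    have hA : ‖A‖ < 1 := calc
      ‖A‖ ≤ 1 * ‖w‖ := by
        rw [norm_neg]
        refine (ContinuousLinearMap.opNorm_comp_le _ _).trans ?_
        gcongr
        exacts [norm_l1Lift_le _ zero_le_one _, norm_l1Conv_le w]
      _ < 1 := by rwa [one_mul]
    let u := Units.oneSub A hA
    obtain ⟨q, hq⟩ : ∃ q, (1 - A) q = divPow Γ d f :=
      ⟨u⁻¹.val (divPow Γ d f), congr($(u.mul_inv) (divPow Γ d f))⟩
    refine ⟨q, ?_⟩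
    rw [map_sub, ← hq]
    simp [A]
  refine ⟨q, fun j ↦ coeffPow Γ j (f - l1Conv w q), fun t ht ζ hζ ↦ ?_⟩
  have hsub : gpsEval₂ t ζ (f - l1Conv w q) =
      gpsEval₂ t ζ f - gpsEval₂ t ζ w * gpsEval₂ t ζ q := by
    rw [← gpsEval₂_l1Conv hΓ ht hζ]
    exact map_sub (l1Lift _ 1 (norm_rpow_mul_pow_le_one hΓ ht hζ)) _ _
  have hdiv := gpsEval₂_eq_pow_mul_add_sum hΓ ht hζ d (f - l1Conv w q)
  rw [hq, hsub] at hdiv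
  linear_combination hdiv

end WeierstrassDivision

section AlgebraicFunctions

theorem forall_eq_zero_or_forall_ne_zero {X R : Type*} [TopologicalSpace X]
    [TopologicalSpace R] [T1Space R] [MulZeroClass R] [NoZeroDivisors R] {S : Set X}
    (hS : IsPreconnected S) {h g : X → R} (hh : ContinuousOn h S) (hg : ContinuousOn g S)
    (hmul : ∀ x ∈ S, h x * g x = 0) (hne : ∀ x ∈ S, h x = 0 → g x ≠ 0) :
    (∀ x ∈ S, h x = 0) ∨ ∀ x ∈ S, h x ≠ 0 := by
  have : PreconnectedSpace S := isPreconnected_iff_preconnectedSpace.1 hS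
  have hset : {x : S | h x = 0} = {x : S | g x ≠ 0} := ext fun x ↦
    ⟨hne x x.2, fun hx ↦ (mul_eq_zero.1 (hmul x x.2)).resolve_right hx⟩
  have hclopen : IsClopen {x : S | h x = 0} :=
    ⟨isClosed_singleton.preimage hh.domRestrict,
      hset ▸ isClosed_singleton.isOpen_compl.preimage hg.domRestrict⟩
  refine (isClopen_iff.1 hclopen).symm.imp (fun H x hx ↦ ?_) fun H x hx h0 ↦ ?_
  · exact eq_univ_iff_forall.1 H ⟨x, hx⟩
  · exact eq_empty_iff_forall_notMem.1 H ⟨x, hx⟩ h0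

theorem eventually_eq_zero_or_ne_zero_of_sum_eq_zero {h : ℝ → ℝ} {p : ℕ → ℝ → ℝ} {n : ℕ} {a : ℝ}
    (hh : ∀ᶠ t in 𝓝[>] a, ContinuousAt h t)
    (hp : ∀ i, ∀ᶠ t in 𝓝[>] a, ContinuousAt (p i) t)
    (hdich : ∀ i, (∀ᶠ t in 𝓝[>] a, p i t = 0) ∨ ∀ᶠ t in 𝓝[>] a, p i t ≠ 0)
    (hlead : ∀ᶠ t in 𝓝[>] a, p n t ≠ 0)
    (hroot : ∀ᶠ t in 𝓝[>] a, ∑ i ∈ Finset.range (n + 1), p i t * h t ^ i = 0) :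
    (∀ᶠ t in 𝓝[>] a, h t = 0) ∨ ∀ᶠ t in 𝓝[>] a, h t ≠ 0 := by
  classical
  have hex : ∃ i, ∀ᶠ t in 𝓝[>] a, p i t ≠ 0 := ⟨n, hlead⟩
  set k := Nat.find hex
  have hkn : k ≤ n := Nat.find_min' hex hlead
  have hlow : ∀ᶠ t in 𝓝[>] a, ∀ i ∈ Finset.range k, p i t = 0 :=
    (Finset.eventually_all _).2 fun i hi ↦
      (hdich i).resolve_right (Nat.find_min hex (Finset.mem_range.1 hi))
  set g : ℝ → ℝ := fun t ↦ ∑ i ∈ Finset.range (n + 1 - k), p (k + i) t * h t ^ i with hg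
  have hmul : ∀ᶠ t in 𝓝[>] a, h t ^ k * g t = 0 := by
    filter_upwards [hroot, hlow] with t ht hlt
    rw [← Nat.add_sub_of_le (hkn.trans (Nat.le_add_right n 1)), Finset.sum_range_add,
      Finset.sum_eq_zero fun i hi ↦ by rw [hlt i hi, zero_mul], zero_add] at ht
    rw [hg, Finset.mul_sum, ← ht]
    exact Finset.sum_congr rfl fun i _ ↦ by ring
  have hcont : ∀ᶠ t in 𝓝[>] a, ContinuousAt g t := by
    filter_upwards [hh, (Finset.eventually_all (Finset.range (n + 1 - k))).2
      fun i _ ↦ hp (k + i)] with t ht hpt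
    exact tendsto_finsetSum _ fun i hi ↦ (hpt i hi).mul (ht.pow i)
  have hgne : ∀ t, h t = 0 → g t = p k t := fun t ht ↦ by
    rw [hg]
    dsimp only
    rw [Finset.sum_eq_single_of_mem 0 (by simp; omega) fun i _ hi ↦ by simp [ht, hi]]
    simp
  obtain ⟨b, hab, hb⟩ := mem_nhdsGT_iff_exists_Ioo_subset.1
    (hh.and (hcont.and (hmul.and (Nat.find_spec hex))))
  refine (forall_eq_zero_or_forall_ne_zero isPreconnected_Ioo (h := h) (g := g)
    (fun t ht ↦ (hb ht).1.continuousWithinAt) (fun t ht ↦ (hb ht).2.1.continuousWithinAt)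
    (fun t ht ↦ ?_) fun t ht h0 ↦ ?_).imp
    (fun H ↦ mem_of_superset (Ioo_mem_nhdsGT hab) H) fun H ↦ mem_of_superset (Ioo_mem_nhdsGT hab) H
  · exact mul_eq_zero.2 ((mul_eq_zero.1 (hb ht).2.2.1).imp_left eq_zero_of_pow_eq_zero)
  · exact hgne t h0 ▸ (hb ht).2.2.2

end AlgebraicFunctions

section GeneralizedPowerSeriesRing

variable {Γ : AddSubmonoid ℝ} {t ζ : ℝ}

lemma tendsto_gpsEval_mul_rpow_neg {f : ℓ¹(Γ, ℝ)} {γ₀ : Γ}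
    (hmin : ∀ γ < γ₀, f γ = 0) :
    Tendsto (fun t ↦ gpsEval t f * t ^ (-γ₀ : ℝ)) (𝓝[>] 0) (𝓝 (f γ₀)) := by
  have hlim : Tendsto (fun t : ℝ ↦ ∑' γ : Γ, f γ * t ^ ((γ : ℝ) - γ₀)) (𝓝[>] 0)
      (𝓝 (∑' γ : Γ, if γ = γ₀ then f γ else 0)) := by
    refine tendsto_tsum_of_dominated_convergence (summable_norm_l1 f) (fun γ ↦ ?_) ?_
    · rcases lt_trichotomy γ γ₀ with h | rfl | h
      · simp [hmin γ h]
      · simp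
      · rw [if_neg h.ne', ← mul_zero (f γ)]
        refine Tendsto.const_mul _ ?_
        have hpos : (0 : ℝ) < γ - γ₀ := sub_pos.2 h
        simpa [Real.zero_rpow hpos.ne'] using
          (Real.continuousAt_rpow_const 0 _ (.inr hpos.le)).tendsto.mono_left nhdsWithin_le_nhds
    · filter_upwards [Ioo_mem_nhdsGT one_pos] with t ht γ
      rcases lt_or_ge γ γ₀ with h | h
      · simp [hmin γ h]
      · rw [norm_mul, Real.norm_of_nonneg (Real.rpow_nonneg ht.1.le _)]
        exact mul_le_of_le_one_right (norm_nonneg _)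
          (Real.rpow_le_one ht.1.le ht.2.le (sub_nonneg.2 h))
  rw [tsum_ite_eq] at hlim
  refine hlim.congr' ?_
  filter_upwards [self_mem_nhdsWithin] with t ht
  rw [gpsEval, l1Pairing, ← tsum_mul_right]
  exact tsum_congr fun γ ↦ by rw [sub_eq_add_neg, Real.rpow_add ht, mul_assoc]

lemma eventually_gpsEval_ne_zero (hΓ : (Γ : Set ℝ).IsPWO) {f : ℓ¹(Γ, ℝ)} (hf : f ≠ 0) :
    ∀ᶠ t in 𝓝[>] (0 : ℝ), gpsEval t f ≠ 0 := by
  obtain ⟨γ₁, hγ₁⟩ : ∃ γ, f γ ≠ 0 := by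
    by_contra! h
    exact hf (lp.ext (funext h))
  have : WellFoundedLT Γ := ⟨hΓ.isWF⟩
  obtain ⟨γ₀, hγ₀, hmin⟩ := wellFounded_lt.has_min {γ | f γ ≠ 0} ⟨γ₁, hγ₁⟩
  have hlim := tendsto_gpsEval_mul_rpow_neg fun γ hγ ↦ not_not.1 fun h ↦ hmin γ h hγ
  filter_upwards [hlim.eventually_ne hγ₀] with t ht h0
  exact ht (by rw [h0, zero_mul])

lemma continuousOn_gpsEval (hΓ : ∀ e ∈ Γ, 0 ≤ e) (f : ℓ¹(Γ, ℝ)) :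
    ContinuousOn (fun t ↦ gpsEval t f) (Ioo 0 1) := by
  refine continuousOn_tsum (fun γ t ht ↦ ?_) (summable_norm_l1 f) fun γ t ht ↦ ?_
  · exact ((Real.continuousAt_rpow_const t _ (.inl ht.1.ne')).const_mul _).continuousWithinAt
  · rw [norm_mul]
    exact mul_le_of_le_one_right (norm_nonneg _) (norm_rpow_le_one hΓ ht γ)

/-- The ring of functions which on `(0, 1)` are sums of a generalized power series with exponents
in `Γ`. -/
def gpsRing (Γ : AddSubmonoid ℝ) (hΓ : ∀ e ∈ Γ, 0 ≤ e) : Subring (ℝ → ℝ) where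
  carrier := {φ | ∃ f : ℓ¹(Γ, ℝ), ∀ t ∈ Ioo (0 : ℝ) 1, φ t = gpsEval t f}
  mul_mem' := by
    rintro φ ψ ⟨f, hf⟩ ⟨g, hg⟩
    exact ⟨l1Conv f g, fun t ht ↦ by rw [gpsEval_l1Conv hΓ ht, Pi.mul_apply, hf t ht, hg t ht]⟩
  one_mem' := ⟨lp.single 1 0 1, fun t _ ↦ by simp [gpsEval, l1Pairing_single]⟩
  add_mem' := by
    rintro φ ψ ⟨f, hf⟩ ⟨g, hg⟩
    refine ⟨f + g, fun t ht ↦ ?_⟩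
    rw [Pi.add_apply, hf t ht, hg t ht]
    exact (map_add (l1Lift _ 1 (norm_rpow_le_one hΓ ht)) f g).symm
  zero_mem' := ⟨0, fun t _ ↦ by simp [gpsEval, l1Pairing]⟩
  neg_mem' := by
    rintro φ ⟨f, hf⟩
    refine ⟨-f, fun t ht ↦ ?_⟩
    rw [Pi.neg_apply, hf t ht]
    exact (map_neg (l1Lift _ 1 (norm_rpow_le_one hΓ ht)) f).symm

lemma eventually_eq_zero_or_ne_zero_of_mem_gpsRing {hΓ : ∀ e ∈ Γ, 0 ≤ e}
    (hpwo : (Γ : Set ℝ).IsPWO) (φ : gpsRing Γ hΓ) :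
    (∀ᶠ t in 𝓝[>] (0 : ℝ), φ.1 t = 0) ∨ ∀ᶠ t in 𝓝[>] (0 : ℝ), φ.1 t ≠ 0 := by
  obtain ⟨φ, f, hf⟩ := φ
  have hφ : ∀ᶠ t in 𝓝[>] (0 : ℝ), φ t = gpsEval t f := mem_of_superset (Ioo_mem_nhdsGT one_pos) hf
  rcases eq_or_ne f 0 with rfl | h
  · exact .inl (hφ.mono fun t ht ↦ by simp [ht, gpsEval, l1Pairing])
  · exact .inr ((hφ.and (eventually_gpsEval_ne_zero hpwo h)).mono fun t ht ↦ ht.1.trans_ne ht.2)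

lemma eventually_continuousAt_of_mem_gpsRing {hΓ : ∀ e ∈ Γ, 0 ≤ e} (φ : gpsRing Γ hΓ) :
    ∀ᶠ t in 𝓝[>] (0 : ℝ), ContinuousAt φ.1 t := by
  obtain ⟨φ, f, hf⟩ := φ
  filter_upwards [Ioo_mem_nhdsGT one_pos] with t ht
  exact ((continuousOn_gpsEval hΓ f).congr hf).continuousAt (isOpen_Ioo.mem_nhds ht)

/-- Evaluation of elements of `gpsRing` at a point. -/
def gpsRing.evalAt {hΓ : ∀ e ∈ Γ, 0 ≤ e} (t : ℝ) : gpsRing Γ hΓ →+* ℝ :=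
  (Pi.evalRingHom (fun _ : ℝ ↦ ℝ) t).comp (gpsRing Γ hΓ).subtype

lemma exists_matrix_mulVec_eq_smul (hΓ : ∀ e ∈ Γ, 0 ≤ e) {w : ℓ¹(Γ × ℕ, ℝ)} (hw : ‖w‖ < 1) (d : ℕ)
    (f : ℓ¹(Γ × ℕ, ℝ)) : ∃ M : Matrix (Fin d) (Fin d) (gpsRing Γ hΓ),
      ∀ t ∈ Ioo (0 : ℝ) 1, ∀ ζ : ℝ, |ζ| ≤ 1 → ζ ^ d + gpsEval₂ t ζ w = 0 →
        (M.map (gpsRing.evalAt t)).mulVec (fun j ↦ ζ ^ (j : ℕ)) =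
          gpsEval₂ t ζ f • fun j : Fin d ↦ ζ ^ (j : ℕ) := by
  choose q r hr using fun i : Fin d ↦
    exists_eq_mul_add_sum hΓ hw d (l1Conv f (lp.single 1 (0, (i : ℕ)) 1))
  refine ⟨.of fun i j ↦ ⟨fun t ↦ gpsEval t (r i j), r i j, fun _ _ ↦ rfl⟩,
    fun t ht ζ hζ h0 ↦ funext fun i ↦ ?_⟩
  have hdiv := hr i t ht ζ hζ
  rw [gpsEval₂_l1Conv hΓ ht hζ, h0, mul_zero, zero_add, ← Fin.sum_univ_eq_sum_range
    (fun j ↦ ζ ^ j * gpsEval t (r i j))] at hdiv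
  simpa [gpsEval₂, l1Pairing_single, Matrix.mulVec, dotProduct, mul_comm, gpsRing.evalAt]
    using hdiv.symm

/-- Cayley-Hamilton: modulo the Weierstrass polynomial, multiplication by `f` is given by a matrix,
whose characteristic polynomial annihilates the value of `f` at a zero `ζ`. -/
lemma exists_monic_eval_map_eq_zero (hΓ : ∀ e ∈ Γ, 0 ≤ e) {w : ℓ¹(Γ × ℕ, ℝ)} (hw : ‖w‖ < 1) (d : ℕ)
    (f : ℓ¹(Γ × ℕ, ℝ)) : ∃ P : Polynomial (gpsRing Γ hΓ), P.Monic ∧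
      ∀ t ∈ Ioo (0 : ℝ) 1, ∀ ζ : ℝ, |ζ| ≤ 1 → ζ ^ d + gpsEval₂ t ζ w = 0 →
        (P.map (gpsRing.evalAt t)).eval (gpsEval₂ t ζ f) = 0 := by
  obtain ⟨M, hM⟩ := exists_matrix_mulVec_eq_smul hΓ hw d f
  refine ⟨M.charpoly, M.charpoly_monic, fun t ht ζ hζ h0 ↦ ?_⟩
  have hd : 0 < d := by
    rw [pos_iff_ne_zero]
    rintro rfl
    have hle : |gpsEval₂ t ζ w| ≤ 1 * ‖w‖ := ContinuousLinearMap.le_of_opNorm_le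
      (l1Lift _ 1 (norm_rpow_mul_pow_le_one hΓ ht hζ)) (norm_l1Lift_le _ zero_le_one _) w
    rw [pow_zero, add_comm, ← eq_neg_iff_add_eq_zero] at h0
    rw [h0, abs_neg, abs_one] at hle
    linarith
  rw [← Matrix.charpoly_map, Matrix.eval_charpoly, ← Matrix.exists_mulVec_eq_zero_iff]
  refine ⟨fun j ↦ ζ ^ (j : ℕ), fun h ↦ ?_, ?_⟩
  · simpa using congrFun h ⟨0, hd⟩
  · rw [Matrix.sub_mulVec, hM t ht ζ hζ h0]
    ext i
    simp [Matrix.scalar_apply]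

theorem eventually_eq_zero_or_ne_zero_of_gpsEval₂ (hΓ : ∀ e ∈ Γ, 0 ≤ e) (hpwo : (Γ : Set ℝ).IsPWO)
    {w : ℓ¹(Γ × ℕ, ℝ)} (hw : ‖w‖ < 1) {d : ℕ} {f : ℓ¹(Γ × ℕ, ℝ)} {ζ h : ℝ → ℝ}
    (hh : ∀ᶠ t in 𝓝[>] (0 : ℝ), ContinuousAt h t) (hζ : ∀ᶠ t in 𝓝[>] (0 : ℝ), |ζ t| ≤ 1)
    (hroot : ∀ᶠ t in 𝓝[>] (0 : ℝ), ζ t ^ d + gpsEval₂ t (ζ t) w = 0)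
    (hf : ∀ᶠ t in 𝓝[>] (0 : ℝ), h t = gpsEval₂ t (ζ t) f) :
    (∀ᶠ t in 𝓝[>] (0 : ℝ), h t = 0) ∨ ∀ᶠ t in 𝓝[>] (0 : ℝ), h t ≠ 0 := by
  obtain ⟨P, hP, hroots⟩ := exists_monic_eval_map_eq_zero hΓ hw d f
  refine eventually_eq_zero_or_ne_zero_of_sum_eq_zero (p := fun i ↦ (P.coeff i).1)
    (n := P.natDegree) hh (fun i ↦ eventually_continuousAt_of_mem_gpsRing _)
    (fun i ↦ eventually_eq_zero_or_ne_zero_of_mem_gpsRing hpwo _)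
    (by simp [hP.coeff_natDegree]) ?_
  filter_upwards [hζ, hroot, hf, Ioo_mem_nhdsGT one_pos] with t hζt hrt hft ht
  have heval := hroots t ht _ hζt hrt
  rw [← hft, Polynomial.eval_eq_sum_range' (Nat.lt_succ_of_le Polynomial.natDegree_map_le)] at heval
  simpa [gpsRing.evalAt] using heval

end GeneralizedPowerSeriesRing

section VanishingSeries

/-- `φ` is, near `0⁺`, the sum of a generalized power series with positive exponents; the positive
exponents make it tend to `0`. -/
def IsVanishingSeries (φ : ℝ → ℝ) : Prop :=
  ∃ c : ℝ → ℝ, c.support.IsPWO ∧ (∀ e ∈ c.support, 0 < e) ∧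
    ∀ᶠ t in 𝓝[>] (0 : ℝ), HasSum (fun e ↦ c e * t ^ e) (φ t)

lemma tendsto_tsum_mul_rpow_nhds_zero {c : ℝ → ℝ} (hpos : ∀ e ∈ c.support, 0 < e)
    (hc : ∃ t > 0, Summable fun e ↦ c e * t ^ e) :
    Tendsto (fun t : ℝ ↦ ∑' e, c e * t ^ e) (𝓝[>] 0) (𝓝 0) := by
  obtain ⟨t₀, ht₀, hsum⟩ := hc
  have hterm (e : ℝ) : Tendsto (fun t : ℝ ↦ c e * t ^ e) (𝓝[>] 0) (𝓝 0) := by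
    rcases eq_or_ne (c e) 0 with he | he
    · simp [he]
    · have := (Real.continuousAt_rpow_const 0 e (.inr (hpos e he).le)).tendsto.const_mul (c e)
      rw [Real.zero_rpow (hpos e he).ne', mul_zero] at this
      exact this.mono_left nhdsWithin_le_nhds
  have hbound : ∀ᶠ t in 𝓝[>] (0 : ℝ), ∀ e, ‖c e * t ^ e‖ ≤ ‖c e * t₀ ^ e‖ := by
    filter_upwards [Ioo_mem_nhdsGT ht₀] with t ht e
    rcases eq_or_ne (c e) 0 with he | he
    · simp [he]
    · simp only [norm_mul, Real.norm_of_nonneg (Real.rpow_nonneg ht.1.le e),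
        Real.norm_of_nonneg (Real.rpow_nonneg ht₀.le e)]
      gcongr
      exacts [ht.1.le, (hpos e he).le, ht.2.le]
  simpa using tendsto_tsum_of_dominated_convergence hsum.norm hterm hbound

namespace IsVanishingSeries

variable {φ ψ : ℝ → ℝ}

lemma tendsto (hφ : IsVanishingSeries φ) : Tendsto φ (𝓝[>] 0) (𝓝 0) := by
  obtain ⟨c, -, hpos, hsum⟩ := hφ
  obtain ⟨t₀, h₀, ht₀⟩ := (hsum.and self_mem_nhdsWithin).exists
  exact (tendsto_tsum_mul_rpow_nhds_zero hpos ⟨t₀, ht₀, h₀.summable⟩).congr'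
    (hsum.mono fun t ht ↦ ht.tsum_eq)

lemma congr (hφ : IsVanishingSeries φ) (h : φ =ᶠ[𝓝[>] 0] ψ) : IsVanishingSeries ψ := by
  obtain ⟨c, hpwo, hpos, hsum⟩ := hφ
  exact ⟨c, hpwo, hpos, (hsum.and h).mono fun t ht ↦ ht.2 ▸ ht.1⟩

lemma zero : IsVanishingSeries fun _ ↦ 0 :=
  ⟨0, by simp, by simp, by simp [hasSum_zero]⟩

lemma add (hφ : IsVanishingSeries φ) (hψ : IsVanishingSeries ψ) :
    IsVanishingSeries fun t ↦ φ t + ψ t := by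
  obtain ⟨c, hc, hcpos, hcsum⟩ := hφ
  obtain ⟨d, hd, hdpos, hdsum⟩ := hψ
  refine ⟨c + d, (hc.union hd).mono (Function.support_add c d), fun e he ↦ ?_, ?_⟩
  · exact (Function.support_add c d he).elim (hcpos e) (hdpos e)
  · filter_upwards [hcsum, hdsum] with t h h'
    simpa [add_mul] using h.add h'

lemma sum {ι : Type*} {s : Finset ι} {φ : ι → ℝ → ℝ} (h : ∀ i ∈ s, IsVanishingSeries (φ i)) :
    IsVanishingSeries fun t ↦ ∑ i ∈ s, φ i t := by
  classical
  induction s using Finset.induction_on with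
  | empty => simpa using zero
  | insert i s hi ih =>
    simp only [Finset.sum_insert hi]
    exact (h i (Finset.mem_insert_self i s)).add
      (ih fun j hj ↦ h j (Finset.mem_insert_of_mem hj))

lemma const_mul (hφ : IsVanishingSeries φ) (k : ℝ) : IsVanishingSeries fun t ↦ k * φ t := by
  obtain ⟨c, hpwo, hpos, hsum⟩ := hφ
  have hsupp : (fun e ↦ k * c e).support ⊆ c.support :=
    fun e he ↦ right_ne_zero_of_mul he
  refine ⟨fun e ↦ k * c e, hpwo.mono hsupp, fun e he ↦ hpos e (hsupp he), ?_⟩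
  filter_upwards [hsum] with t ht
  simpa [mul_assoc] using ht.mul_left k

lemma rpow_mul (hφ : IsVanishingSeries φ) {s : ℝ} (hs : 0 ≤ s) :
    IsVanishingSeries fun t ↦ t ^ s * φ t := by
  obtain ⟨c, hpwo, hpos, hsum⟩ := hφ
  have hsupp : (fun e ↦ c (e - s)).support ⊆ (· + s) '' c.support :=
    fun e he ↦ ⟨e - s, he, sub_add_cancel e s⟩
  refine ⟨fun e ↦ c (e - s), (hpwo.image_of_monotone add_left_mono).mono hsupp,
    fun e he ↦ ?_, ?_⟩
  · linarith [hpos (e - s) he]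
  · filter_upwards [hsum, self_mem_nhdsWithin] with t ht ht0
    rw [← (Equiv.addRight s).hasSum_iff]
    have hterm (e : ℝ) : c (e + s - s) * t ^ (e + s) = t ^ s * (c e * t ^ e) := by
      rw [add_sub_cancel_right, Real.rpow_add ht0, mul_comm (t ^ e), mul_left_comm]
    simpa only [Function.comp_def, Equiv.coe_addRight, hterm] using ht.mul_left (t ^ s)

lemma rpow {s : ℝ} (hs : 0 < s) : IsVanishingSeries fun t ↦ t ^ s := by
  refine ⟨Pi.single s 1, ?_, ?_, .of_forall fun t ↦ ?_⟩
  · exact (finite_singleton s).isPWO.mono Pi.support_single_subset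
  · exact fun e he ↦ Pi.support_single_subset he ▸ hs
  · simpa using hasSum_single (f := fun e ↦ (Pi.single s 1 : ℝ → ℝ) e * t ^ e) s
      fun e he ↦ by simp [he]

lemma of_analyticAt {f : ℝ → ℝ} (hf : AnalyticAt ℝ f 0) (h0 : f 0 = 0) :
    IsVanishingSeries f := by
  obtain ⟨p, hp⟩ := hf
  have hcast : Function.Injective ((↑) : ℕ → ℝ) := Nat.cast_injective
  have hsupp : (Function.extend ((↑) : ℕ → ℝ) p.coeff 0).support ⊆ range ((↑) : ℕ → ℝ) := by
    intro e he
    by_contra hr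
    exact he (Function.extend_apply' _ _ _ hr)
  have hp0 : p.coeff 0 = 0 := (hp.coeff_zero 1).trans h0
  refine ⟨Function.extend (↑) p.coeff 0, ?_, fun e he ↦ ?_, ?_⟩
  · refine IsPWO.mono ?_ hsupp
    rw [← image_univ]
    exact (isPWO_of_wellQuasiOrderedLE _).image_of_monotone Nat.mono_cast
  · obtain ⟨n, rfl⟩ := hsupp he
    rw [Function.mem_support, hcast.extend_apply] at he
    exact Nat.cast_pos.2 (Nat.pos_of_ne_zero fun hn ↦ he (hn ▸ hp0))
  · filter_upwards [(hasFPowerSeriesAt_iff.1 hp).filter_mono nhdsWithin_le_nhds] with t ht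
    rw [zero_add] at ht
    rw [← hcast.hasSum_iff fun e he ↦ by simp [Function.notMem_support.1 fun h ↦ he (hsupp h)]]
    simpa [Function.comp_def, hcast.extend_apply, mul_comm] using ht

end IsVanishingSeries

/-- The rescalings `s ↦ φ (ρ * s)` are sums on `(0, 1)` of generalized power series with exponents
in `Γ`, whose `ℓ¹`-norms tend to `0` as `ρ → 0⁺`. -/
def HasSmallRescalings (Γ : AddSubmonoid ℝ) (φ : ℝ → ℝ) : Prop :=
  ∀ ε > 0, ∀ᶠ ρ in 𝓝[>] (0 : ℝ), ∃ a : ℓ¹(Γ, ℝ), ‖a‖ < ε ∧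
    ∀ s ∈ Ioo (0 : ℝ) 1, gpsEval s a = φ (ρ * s)

lemma hasSmallRescalings_of_hasSum {Γ : AddSubmonoid ℝ} {φ c : ℝ → ℝ} (hΓ : c.support ⊆ Γ)
    (hpos : ∀ e ∈ c.support, 0 < e)
    (hsum : ∀ᶠ t in 𝓝[>] (0 : ℝ), HasSum (fun e ↦ c e * t ^ e) (φ t)) :
    HasSmallRescalings Γ φ := by
  intro ε hε
  obtain ⟨t₀, ht₀, hsum⟩ := mem_nhdsGT_iff_exists_Ioo_subset.1 hsum
  have hnorm : ∀ t ∈ Ioo 0 t₀, ∀ e, ‖c e * t ^ e‖ = ‖c e‖ * t ^ e := fun t ht e ↦ by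
    rw [norm_mul, Real.norm_of_nonneg (Real.rpow_nonneg ht.1.le e)]
  have hsmall : Tendsto (fun t : ℝ ↦ ∑' e, ‖c e‖ * t ^ e) (𝓝[>] 0) (𝓝 0) := by
    refine tendsto_tsum_mul_rpow_nhds_zero (by simpa using hpos) ⟨t₀ / 2, half_pos ht₀, ?_⟩
    have hmem : t₀ / 2 ∈ Ioo 0 t₀ := ⟨half_pos ht₀, half_lt_self ht₀⟩
    simpa only [hnorm _ hmem] using (hsum hmem).summable.norm
  filter_upwards [hsmall.eventually_lt_const hε, Ioo_mem_nhdsGT ht₀] with ρ hρε hρ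
  have hρsum : Summable fun γ : Γ ↦ ‖c γ * ρ ^ (γ : ℝ)‖ :=
    (hsum hρ).summable.norm.comp_injective Subtype.val_injective
  refine ⟨⟨fun γ ↦ c γ * ρ ^ (γ : ℝ), memℓp_gen (by simpa using hρsum)⟩, ?_, fun s hs ↦ ?_⟩
  · rw [norm_l1_eq_tsum]
    refine lt_of_eq_of_lt ?_ hρε
    simp only [hnorm ρ hρ]
    exact tsum_subtype_eq_of_support_subset (f := fun e ↦ ‖c e‖ * ρ ^ e) fun e he ↦
      hΓ (norm_ne_zero_iff.1 (left_ne_zero_of_mul he))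
  · have hρs : ρ * s ∈ Ioo 0 t₀ :=
      ⟨mul_pos hρ.1 hs.1, (mul_lt_of_lt_one_right hρ.1 hs.2).trans hρ.2⟩
    rw [← (hsum hρs).tsum_eq, gpsEval, l1Pairing,
      ← tsum_subtype_eq_of_support_subset (s := (Γ : Set ℝ)) fun e he ↦
        hΓ (left_ne_zero_of_mul he)]
    exact tsum_congr fun γ ↦ by rw [Real.mul_rpow hρ.1.le hs.1.le, mul_assoc]

lemma exists_addSubmonoid_hasSmallRescalings {ι : Type*} [Finite ι] {φ : ι → ℝ → ℝ}
    (hφ : ∀ i, IsVanishingSeries (φ i)) :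
    ∃ Γ : AddSubmonoid ℝ, (Γ : Set ℝ).IsPWO ∧ (∀ e ∈ Γ, 0 ≤ e) ∧
      ∀ i, HasSmallRescalings Γ (φ i) := by
  choose c hpwo hpos hsum using hφ
  have hnonneg : ∀ e ∈ ⋃ i, (c i).support, 0 ≤ e := fun e he ↦
    (mem_iUnion.1 he).elim fun i hi ↦ (hpos i e hi).le
  refine ⟨AddSubmonoid.closure (⋃ i, (c i).support), ?_, fun e he ↦ ?_, fun i ↦ ?_⟩
  · have := Fintype.ofFinite ι
    refine IsPWO.addSubmonoid_closure hnonneg ?_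
    simpa using (Finset.isPWO_bUnion Finset.univ).2 fun i _ ↦ hpwo i
  · exact AddSubmonoid.closure_induction hnonneg le_rfl (fun _ _ _ _ ↦ add_nonneg) he
  · exact hasSmallRescalings_of_hasSum
      ((subset_iUnion (fun i ↦ (c i).support) i).trans AddSubmonoid.subset_closure)
        (hpos i) (hsum i)

lemma eventually_exists_l1Pairing_pow_eq {v : ℝ → ℝ} {z₀ : ℝ} (hv : AnalyticAt ℝ v z₀) :
    ∀ᶠ r in 𝓝[>] (0 : ℝ), ∃ b : ℓ¹(ℕ, ℝ), ∀ ζ, |ζ| ≤ 1 →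
      l1Pairing (fun n ↦ ζ ^ n) b = v (z₀ + r * ζ) := by
  obtain ⟨p, hp⟩ := hv
  obtain ⟨ε, hε, hball⟩ := Metric.eventually_nhds_iff.1 (hasFPowerSeriesAt_iff.1 hp)
  filter_upwards [Ioo_mem_nhdsGT hε] with r hr
  have hsum := (hball (y := r) (by simpa [abs_of_pos hr.1] using hr.2)).summable.norm
  refine ⟨⟨fun n ↦ r ^ n • p.coeff n, memℓp_gen (by simpa using hsum)⟩, fun ζ hζ ↦ ?_⟩
  have hrζ : |r * ζ| < ε := by
    rw [abs_mul, abs_of_pos hr.1]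
    exact (mul_le_of_le_one_right hr.1.le hζ).trans_lt hr.2
  rw [← (hball (by simpa using hrζ)).tsum_eq]
  exact tsum_congr fun n ↦ by simp [mul_pow, mul_right_comm]

lemma eventually_exists_gpsEval₂_eq_sum {Γ : AddSubmonoid ℝ} (hΓ : ∀ e ∈ Γ, 0 ≤ e)
    {ι : Type*} [Fintype ι] {φ v : ι → ℝ → ℝ} {z₀ : ℝ} (hφ : ∀ i, HasSmallRescalings Γ (φ i))
    (hv : ∀ i, AnalyticAt ℝ (v i) z₀) :
    ∀ᶠ r in 𝓝[>] (0 : ℝ), ∀ ε > 0, ∀ᶠ ρ in 𝓝[>] (0 : ℝ), ∃ w : ℓ¹(Γ × ℕ, ℝ), ‖w‖ < ε ∧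
      ∀ s ∈ Ioo (0 : ℝ) 1, ∀ ζ, |ζ| ≤ 1 →
        gpsEval₂ s ζ w = ∑ i, φ i (ρ * s) * v i (z₀ + r * ζ) := by
  filter_upwards [eventually_all.2 fun i ↦ eventually_exists_l1Pairing_pow_eq (hv i)] with r hr ε hε
  choose b hb using hr
  have hB : 0 < 1 + ∑ i, ‖b i‖ := by positivity
  filter_upwards [eventually_all.2 fun i ↦ hφ i (ε / (1 + ∑ i, ‖b i‖)) (by positivity)] with ρ hρ
  choose a ha has using hρ
  refine ⟨∑ i, l1Tensor (a i) (b i), ?_, fun s hs ζ hζ ↦ ?_⟩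
  · calc ‖∑ i, l1Tensor (a i) (b i)‖ ≤ ∑ i, ‖l1Tensor (a i) (b i)‖ := norm_sum_le _ _
      _ ≤ ∑ i, ε / (1 + ∑ i, ‖b i‖) * ‖b i‖ := by
        gcongr with i
        rw [norm_l1Tensor]
        gcongr
        exact (ha i).le
      _ = ε * ((∑ i, ‖b i‖) / (1 + ∑ i, ‖b i‖)) := by rw [← Finset.mul_sum]; ring
      _ < ε := mul_lt_of_lt_one_right hε ((div_lt_one hB).2 (lt_one_add _))
  · rw [gpsEval₂, l1Pairing_eq_l1Lift (norm_rpow_mul_pow_le_one hΓ hs hζ), map_sum]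
    refine Finset.sum_congr rfl fun i _ ↦ ?_
    rw [← l1Pairing_eq_l1Lift, l1Pairing_l1Tensor (norm_rpow_le_one hΓ hs) (norm_pow_le_one hζ),
      hb i ζ hζ, ← has i s hs, gpsEval]

theorem eventually_eq_zero_or_ne_zero_of_pow_add_sum_eq_zero {ι κ : Type*} [Fintype ι] [Fintype κ]
    {φ v : ι → ℝ → ℝ} {ψ u : κ → ℝ → ℝ} {z h : ℝ → ℝ} {z₀ : ℝ} {d : ℕ}
    (hφ : ∀ i, IsVanishingSeries (φ i)) (hv : ∀ i, AnalyticAt ℝ (v i) z₀)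
    (hψ : ∀ k, IsVanishingSeries (ψ k)) (hu : ∀ k, AnalyticAt ℝ (u k) z₀)
    (hz : Tendsto z (𝓝[>] 0) (𝓝 z₀))
    (hroot : ∀ᶠ t in 𝓝[>] (0 : ℝ), (z t - z₀) ^ d + ∑ i, φ i t * v i (z t) = 0)
    (hh : ∀ᶠ t in 𝓝[>] (0 : ℝ), ContinuousAt h t)
    (hsum : ∀ᶠ t in 𝓝[>] (0 : ℝ), h t = ∑ k, ψ k t * u k (z t)) :
    (∀ᶠ t in 𝓝[>] (0 : ℝ), h t = 0) ∨ ∀ᶠ t in 𝓝[>] (0 : ℝ), h t ≠ 0 := by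
  obtain ⟨Γ, hpwo, hΓ, hsmall⟩ := exists_addSubmonoid_hasSmallRescalings
    (φ := Sum.elim φ ψ) (Sum.forall.2 ⟨hφ, hψ⟩)
  obtain ⟨r, ⟨hrφ, hrψ⟩, hr⟩ :=
    ((eventually_exists_gpsEval₂_eq_sum hΓ (fun i ↦ hsmall (.inl i)) hv).and
      (eventually_exists_gpsEval₂_eq_sum hΓ (fun k ↦ hsmall (.inr k)) hu)
      |>.and self_mem_nhdsWithin).exists
  replace hr : 0 < r := hr
  obtain ⟨ρ, ⟨⟨w, hw, hwsum⟩, ⟨f, -, hfsum⟩⟩, hρ⟩ :=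
    ((hrφ (r ^ d) (by positivity)).and (hrψ 1 one_pos) |>.and self_mem_nhdsWithin).exists
  replace hρ : 0 < ρ := hρ
  have unscale {P : ℝ → Prop} (hP : ∀ᶠ s in 𝓝[>] (0 : ℝ), P (ρ * s)) :
      ∀ᶠ t in 𝓝[>] (0 : ℝ), P t :=
    (eventually_nhdsGT_zero_mul_left (inv_pos.2 hρ) hP).mono fun t ht ↦ by
      rwa [mul_inv_cancel_left₀ hρ.ne'] at ht
  have hzζ (s : ℝ) : z₀ + r * ((z (ρ * s) - z₀) / r) = z (ρ * s) := by field_simp; ring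
  have hζ : ∀ᶠ s in 𝓝[>] (0 : ℝ), |(z (ρ * s) - z₀) / r| ≤ 1 := by
    filter_upwards [eventually_nhdsGT_zero_mul_left hρ
      (hz.eventually (Metric.ball_mem_nhds z₀ hr))] with s hs
    rw [abs_div, abs_of_pos hr, div_le_one hr]
    exact (Real.dist_eq _ _ ▸ (Metric.mem_ball.1 hs)).le
  refine (eventually_eq_zero_or_ne_zero_of_gpsEval₂ hΓ hpwo (w := (r ^ d)⁻¹ • w) (d := d) (f := f)
    (ζ := fun s ↦ (z (ρ * s) - z₀) / r) (h := fun s ↦ h (ρ * s)) ?_ ?_ hζ ?_ ?_).imp unscale unscale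
  · rw [norm_smul, norm_inv, Real.norm_of_nonneg (by positivity), inv_mul_lt_one₀ (by positivity)]
    exact hw
  · filter_upwards [eventually_nhdsGT_zero_mul_left hρ hh] with s hs
    exact hs.comp (continuous_const_mul ρ).continuousAt
  · filter_upwards [hζ, eventually_nhdsGT_zero_mul_left hρ hroot, Ioo_mem_nhdsGT one_pos]
      with s hs hroot hs1
    have hw_eval : gpsEval₂ s ((z (ρ * s) - z₀) / r) w = -(z (ρ * s) - z₀) ^ d := by
      rw [hwsum s hs1 _ hs, hzζ]
      exact eq_neg_of_add_eq_zero_right hroot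
    rw [gpsEval₂_smul, hw_eval, div_pow]
    field_simp
    ring
  · filter_upwards [hζ, eventually_nhdsGT_zero_mul_left hρ hsum, Ioo_mem_nhdsGT one_pos]
      with s hs hsum hs1
    simp [hsum, hfsum s hs1 _ hs, hzζ]

end VanishingSeries

section Newton

lemma analyticAt_rpow_const {x : ℝ} (hx : 0 < x) (β : ℝ) :
    AnalyticAt ℝ (fun y : ℝ ↦ y ^ β) x := by
  refine (((analyticAt_log hx).mul analyticAt_const).rexp (f := fun y ↦ Real.log y * β)).congr ?_
  filter_upwards [eventually_gt_nhds hx] with y hy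
  rw [Function.comp_apply, Real.rpow_def_of_pos hy]

lemma eventually_pos_or_neg_of_ne_zero {f : ℝ → ℝ} {a : ℝ} (hf : ∀ᶠ t in 𝓝[>] a, ContinuousAt f t)
    (h : ∀ᶠ t in 𝓝[>] a, f t ≠ 0) :
    (∀ᶠ t in 𝓝[>] a, 0 < f t) ∨ ∀ᶠ t in 𝓝[>] a, f t < 0 := by
  obtain ⟨u, hu, huI⟩ := mem_nhdsGT_iff_exists_Ioo_subset.1 (hf.and h)
  have hmem : ∀ᶠ t in 𝓝[>] a, t ∈ Ioo a u := Ioo_mem_nhdsGT hu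
  by_cases! hpos : ∀ t ∈ Ioo a u, 0 < f t
  · exact .inl (hmem.mono hpos)
  obtain ⟨s, hs, hfs⟩ := hpos
  refine .inr (hmem.mono fun t ht ↦ ?_)
  by_contra! hft
  obtain ⟨x, hx, hx0⟩ := isPreconnected_Ioo.intermediate_value hs ht
    (fun x hx ↦ (huI hx).1.continuousWithinAt) ⟨hfs, hft⟩
  exact (huI hx).2 hx0

lemma eq_zero_of_eventually_sum_mul_rpow_eq_zero {ι : Type*} [Fintype ι] {b β : ι → ℝ}
    (hβ : Function.Injective β) {z₀ : ℝ} (hz₀ : 0 < z₀)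
    (h : ∀ᶠ x in 𝓝 z₀, ∑ j, b j * x ^ β j = 0) : b = 0 := by
  have hanalytic : AnalyticOnNhd ℝ (fun x : ℝ ↦ ∑ j, b j * x ^ β j) (Ioi 0) := fun x hx ↦
    Finset.analyticAt_fun_sum _ fun j _ ↦ analyticAt_const.mul (analyticAt_rpow_const hx _)
  have hzero := hanalytic.eqOn_zero_of_preconnected_of_eventuallyEq_zero isPreconnected_Ioi hz₀ h
  let χ (e : ℝ) : Multiplicative ℝ →* ℝ :=
    { toFun s := Real.exp (s.toAdd * e)
      map_one' := by simp
      map_mul' s t := by simp [add_mul, Real.exp_add] }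
  have hχ : Function.Injective χ := fun e e' he ↦ by
    simpa [χ] using DFunLike.congr_fun he (Multiplicative.ofAdd 1)
  have hindep := Fintype.linearIndependent_iff.1
    ((linearIndependent_monoidHom (Multiplicative ℝ) ℝ).comp (χ ∘ β) (hχ.comp hβ))
  refine funext (hindep b (funext fun s ↦ ?_))
  simpa [χ, Real.exp_mul] using hzero (Real.exp_pos s.toAdd)

lemma exists_ne_le_mul_of_sum_eq_zero {ι : Type*} [Fintype ι] [Nonempty ι] {a l u M : ι → ℝ}
    (hl : ∀ j, 0 < l j) (ha : ∀ j, |a j| ∈ Icc (l j) (u j)) (hM : ∀ j, 0 < M j)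
    (h : ∑ j, a j * M j = 0) :
    ∃ i j, i ≠ j ∧ M j ≤ M i ∧ M i ≤ (∑ k, u k) / l i * M j := by
  classical
  obtain ⟨i, hi⟩ := Finite.exists_max M
  rw [← Finset.add_sum_erase _ _ (Finset.mem_univ i)] at h
  have hne : (Finset.univ.erase i).Nonempty := by
    by_contra! hempty
    rw [hempty, Finset.sum_empty, add_zero] at h
    exact (mul_ne_zero (abs_pos.1 ((hl i).trans_le (ha i).1)) (hM i).ne') h
  obtain ⟨j, hj, hjmax⟩ := Finset.exists_max_image _ M hne
  have hu (k : ι) : 0 ≤ u k := (abs_nonneg _).trans (ha k).2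
  refine ⟨i, j, (Finset.ne_of_mem_erase hj).symm, hi j, ?_⟩
  rw [div_mul_eq_mul_div, le_div_iff₀' (hl i)]
  calc l i * M i ≤ |a i * M i| := by
        rw [abs_mul, abs_of_pos (hM i)]
        exact mul_le_mul_of_nonneg_right (ha i).1 (hM i).le
    _ = |∑ k ∈ Finset.univ.erase i, a k * M k| := by rw [eq_neg_of_add_eq_zero_left h, abs_neg]
    _ ≤ ∑ k ∈ Finset.univ.erase i, |a k * M k| := Finset.abs_sum_le_sum_abs _ _
    _ ≤ ∑ k ∈ Finset.univ.erase i, u k * M j := by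
        gcongr with k hk
        rw [abs_mul, abs_of_pos (hM k)]
        exact mul_le_mul (ha k).2 (hjmax k hk) (hM k).le (hu k)
    _ ≤ ∑ k, u k * M j := Finset.sum_le_sum_of_subset_of_nonneg (Finset.erase_subset _ _)
        fun k _ _ ↦ mul_nonneg (hu k) (hM j).le
    _ = (∑ k, u k) * M j := (Finset.sum_mul ..).symm

/-- `f` behaves like the monomial `k * t ^ κ` as `t → 0⁺`, with a generalized power series as
relative error. The leading coefficient `k` may be zero. -/
def HasLeadingTerm (f : ℝ → ℝ) (κ k : ℝ) : Prop :=
  ∃ φ, IsVanishingSeries φ ∧ ∀ᶠ t in 𝓝[>] (0 : ℝ), f t = t ^ κ * (k + φ t)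

namespace HasLeadingTerm

variable {f : ℝ → ℝ} {κ k : ℝ}

lemma tendsto (hf : HasLeadingTerm f κ k) : Tendsto (fun t ↦ f t * t ^ (-κ)) (𝓝[>] 0) (𝓝 k) := by
  obtain ⟨φ, hφ, hfφ⟩ := hf
  have := hφ.tendsto.const_add k
  rw [add_zero] at this
  refine this.congr' ?_
  filter_upwards [hfφ, self_mem_nhdsWithin] with t hft ht
  rw [hft, mul_right_comm, ← Real.rpow_add ht, add_neg_cancel, Real.rpow_zero, one_mul]

lemma rpow_mul (hf : HasLeadingTerm f κ k) (s : ℝ) :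
    HasLeadingTerm (fun t ↦ t ^ s * f t) (s + κ) k := by
  obtain ⟨φ, hφ, hfφ⟩ := hf
  refine ⟨φ, hφ, ?_⟩
  filter_upwards [hfφ, self_mem_nhdsWithin] with t hft ht
  rw [hft, Real.rpow_add ht, mul_assoc]

lemma isVanishingSeries (hf : HasLeadingTerm f κ k) (hκ : 0 < κ) : IsVanishingSeries f := by
  obtain ⟨φ, hφ, hfφ⟩ := hf
  refine (((IsVanishingSeries.rpow hκ).const_mul k).add (hφ.rpow_mul hκ.le)).congr ?_
  filter_upwards [hfφ] with t hft
  rw [hft, mul_add, mul_comm]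

lemma isVanishingSeries_sub (hf : HasLeadingTerm f κ k) (hκ : 0 ≤ κ) :
    IsVanishingSeries fun t ↦ f t - if κ = 0 then k else 0 := by
  rcases hκ.eq_or_lt with rfl | hκ
  · obtain ⟨φ, hφ, hfφ⟩ := hf
    exact hφ.congr (hfφ.mono fun t ht ↦ by simp [ht])
  · simpa [hκ.ne'] using hf.isVanishingSeries hκ

end HasLeadingTerm

lemma exists_ne_frequently_rpow_mul_rpow_mem_Icc {ι : Type*} [Fintype ι] [Nonempty ι]
    {a : ι → ℝ → ℝ} {κ c β : ι → ℝ} {Y : ℝ → ℝ} (ha : ∀ j, HasLeadingTerm (a j) (κ j) (c j))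
    (hc : ∀ j, c j ≠ 0) (hY : ∀ᶠ t in 𝓝[>] (0 : ℝ), 0 < Y t)
    (hroot : ∀ᶠ t in 𝓝[>] (0 : ℝ), ∑ j, a j t * Y t ^ β j = 0) :
    ∃ i j, i ≠ j ∧ ∃ A, ∃ᶠ t in 𝓝[>] (0 : ℝ),
      t ^ (κ i - κ j) * Y t ^ (β i - β j) ∈ Icc 1 A := by
  have hbound (j : ι) : ∀ᶠ t in 𝓝[>] (0 : ℝ), |a j t * t ^ (-κ j)| ∈ Icc (|c j| / 2) (|c j| + 1) :=
    (ha j).tendsto.abs.eventually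
      (Icc_mem_nhds (half_lt_self (abs_pos.2 (hc j))) (lt_add_one _))
  have hpair : ∀ᶠ t in 𝓝[>] (0 : ℝ), ∃ i j, i ≠ j ∧ t ^ (κ i - κ j) * Y t ^ (β i - β j) ∈
      Icc 1 ((∑ k, (|c k| + 1)) / (|c i| / 2)) := by
    filter_upwards [hY, hroot, eventually_all.2 hbound, self_mem_nhdsWithin]
      with t hYt hroot hbound ht
    replace ht : 0 < t := ht
    have hM (j : ι) : 0 < t ^ κ j * Y t ^ β j := by positivity
    obtain ⟨i, j, hij, hle, hle'⟩ := exists_ne_le_mul_of_sum_eq_zero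
      (fun j ↦ half_pos (abs_pos.2 (hc j))) hbound hM <| by
        rw [← hroot]
        refine Finset.sum_congr rfl fun j _ ↦ ?_
        rw [Real.rpow_neg ht.le]
        field_simp
    have hratio : t ^ (κ i - κ j) * Y t ^ (β i - β j) =
        t ^ κ i * Y t ^ β i / (t ^ κ j * Y t ^ β j) := by
      rw [Real.rpow_sub ht, Real.rpow_sub hYt, div_mul_div_comm]
    refine ⟨i, j, hij, ?_⟩
    rw [hratio, mem_Icc, one_le_div (hM j), div_le_iff₀ (hM j)]
    exact ⟨hle, hle'⟩
  obtain ⟨i, j, h⟩ := by simpa only [frequently_exists] using hpair.frequently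
  exact ⟨i, j, h.exists.choose_spec.1, _, h.mono fun t ht ↦ ht.2⟩

lemma rpow_mem_Icc_min_max {w A : ℝ} (hw : w ∈ Icc 1 A) (δ : ℝ) :
    w ^ δ ∈ Icc (min 1 (A ^ δ)) (max 1 (A ^ δ)) := by
  have hw0 : 0 < w := one_pos.trans_le hw.1
  rcases le_total 0 δ with hδ | hδ
  · exact ⟨min_le_of_left_le (Real.one_le_rpow hw.1 hδ),
      le_max_of_le_right (Real.rpow_le_rpow hw0.le hw.2 hδ)⟩
  · exact ⟨min_le_of_right_le (Real.rpow_le_rpow_of_nonpos hw0 hw.2 hδ),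
      le_max_of_le_left (Real.rpow_le_one_of_one_le_of_nonpos hw.1 hδ)⟩

-- `-l` is the slope of an edge of the Newton polygon of the equation.
lemma exists_frequently_mul_rpow_neg_mem_Icc {ι : Type*} [Fintype ι] [Nonempty ι]
    {a : ι → ℝ → ℝ} {κ c β : ι → ℝ} {Y : ℝ → ℝ} (ha : ∀ j, HasLeadingTerm (a j) (κ j) (c j))
    (hc : ∀ j, c j ≠ 0) (hβ : Function.Injective β) (hY : ∀ᶠ t in 𝓝[>] (0 : ℝ), 0 < Y t)
    (hroot : ∀ᶠ t in 𝓝[>] (0 : ℝ), ∑ j, a j t * Y t ^ β j = 0) :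
    ∃ l u v : ℝ, 0 < u ∧ ∃ᶠ t in 𝓝[>] (0 : ℝ), Y t * t ^ (-l) ∈ Icc u v := by
  obtain ⟨i, j, hij, A, hA⟩ := exists_ne_frequently_rpow_mul_rpow_mem_Icc ha hc hY hroot
  have hδ : β i - β j ≠ 0 := sub_ne_zero.2 (hβ.ne hij)
  obtain ⟨t₀, ht₀⟩ := hA.exists
  refine ⟨-(κ i - κ j) / (β i - β j), min 1 (A ^ (1 / (β i - β j))),
    max 1 (A ^ (1 / (β i - β j))),
    lt_min one_pos (Real.rpow_pos_of_pos (one_pos.trans_le (ht₀.1.trans ht₀.2)) _),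
    (hA.and_eventually (hY.and self_mem_nhdsWithin)).mono ?_⟩
  rintro t ⟨hw, hYt, ht⟩
  replace ht : 0 < t := ht
  convert! rpow_mem_Icc_min_max hw (1 / (β i - β j)) using 1
  rw [Real.mul_rpow (by positivity) (by positivity), ← Real.rpow_mul ht.le, ← Real.rpow_mul hYt.le,
    mul_one_div_cancel hδ, Real.rpow_one, mul_comm, neg_div, neg_neg, mul_one_div]

lemma tendsto_of_frequently_mem_Icc {α : Type*} {F : Filter α} [F.NeBot] {z : α → ℝ} {C : Set ℝ}
    (hC : ∀ p q, 0 ≤ p → p < q → ∃ c ∈ C, c ∈ Ioo p q)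
    (hz : ∀ c ∈ C, 0 < c → (∀ᶠ t in F, c < z t) ∨ ∀ᶠ t in F, z t < c) {u v : ℝ} (hu : 0 < u)
    (huv : ∃ᶠ t in F, z t ∈ Icc u v) : ∃ z₀ > 0, Tendsto z F (𝓝 z₀) := by
  obtain ⟨t₀, ht₀⟩ := huv.exists
  obtain ⟨c₁, hc₁, hpos, hc₁u⟩ := hC 0 u le_rfl hu
  obtain ⟨c₂, hc₂, hvc₂, -⟩ := hC v (v + 1) (hu.le.trans (ht₀.1.trans ht₀.2)) (lt_add_one v)
  have hlo : ∀ᶠ t in F, c₁ < z t := (hz c₁ hc₁ hpos).resolve_right fun h ↦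
    have ⟨t, ht, ht'⟩ := (huv.and_eventually h).exists
    (hc₁u.trans_le ht.1).not_gt ht'
  have hhi : ∀ᶠ t in F, z t < c₂ :=
    (hz c₂ hc₂ (hu.trans_le (ht₀.1.trans ht₀.2) |>.trans hvc₂)).resolve_left fun h ↦
      have ⟨t, ht, ht'⟩ := (huv.and_eventually h).exists
      (ht.2.trans_lt hvc₂).not_gt ht'
  have hcross (p q : ℝ) (hpq : p < q) : ¬((∃ᶠ t in F, z t < p) ∧ ∃ᶠ t in F, q < z t) := by
    rintro ⟨hp, hq⟩
    obtain ⟨t, htp, htc⟩ := (hp.and_eventually hlo).exists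
    have hp0 : 0 < p := hpos.trans (htc.trans htp)
    obtain ⟨c, hc, hpc, hcq⟩ := hC p q hp0.le hpq
    rcases hz c hc (hp0.trans hpc) with h | h
    · obtain ⟨t, htp, htc⟩ := (hp.and_eventually h).exists
      exact (htp.trans hpc).not_gt htc
    · obtain ⟨t, htq, htc⟩ := (hq.and_eventually h).exists
      exact (hcq.trans htq).not_gt htc
  obtain ⟨z₀, hz₀⟩ := tendsto_of_no_upcrossings dense_univ
    (fun p _ q _ ↦ hcross p q) ⟨c₂, hhi.mono fun _ ↦ le_of_lt⟩ ⟨c₁, hlo.mono fun _ ↦ le_of_lt⟩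
  exact ⟨z₀, hpos.trans_le (ge_of_tendsto hz₀ (hlo.mono fun _ ↦ le_of_lt)), hz₀⟩

lemma exists_tendsto_of_sum_mul_rpow_eq_zero {ι : Type*} [Fintype ι] {a : ι → ℝ → ℝ}
    {b β : ι → ℝ} {z : ℝ → ℝ} (hβ : Function.Injective β) (hb : b ≠ 0)
    (ha : ∀ j, Tendsto (a j) (𝓝[>] 0) (𝓝 (b j))) (hz : ∀ᶠ t in 𝓝[>] (0 : ℝ), ContinuousAt z t)
    (hroot : ∀ᶠ t in 𝓝[>] (0 : ℝ), ∑ j, a j t * z t ^ β j = 0) {u v : ℝ} (hu : 0 < u)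
    (huv : ∃ᶠ t in 𝓝[>] (0 : ℝ), z t ∈ Icc u v) : ∃ z₀ > 0, Tendsto z (𝓝[>] 0) (𝓝 z₀) := by
  refine tendsto_of_frequently_mem_Icc (C := {c | ∑ j, b j * c ^ β j ≠ 0}) (fun p q hp hpq ↦ ?_)
    (fun c hc _ ↦ ?_) hu huv
  · by_contra! hzero
    refine hb (eq_zero_of_eventually_sum_mul_rpow_eq_zero hβ
      (by linarith : 0 < (p + q) / 2) ?_)
    filter_upwards [Ioo_mem_nhds (by linarith : p < (p + q) / 2) (by linarith : (p + q) / 2 < q)]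
      with x hx
    by_contra hx0
    exact hzero x hx0 hx
  · have hlim : Tendsto (fun t ↦ ∑ j, a j t * c ^ β j) (𝓝[>] 0) (𝓝 (∑ j, b j * c ^ β j)) :=
      tendsto_finsetSum _ fun j _ ↦ (ha j).mul_const _
    have hne : ∀ᶠ t in 𝓝[>] (0 : ℝ), z t - c ≠ 0 := by
      filter_upwards [hlim.eventually_ne hc, hroot] with t hne hroot hzc
      exact hne (sub_eq_zero.1 hzc ▸ hroot)
    simpa using eventually_pos_or_neg_of_ne_zero (hz.mono fun t ht ↦ ht.sub continuousAt_const) hne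

lemma eventually_eq_zero_or_ne_zero_of_sum_mul_rpow_eq_zero {ι κ : Type*} [Fintype ι] [Fintype κ]
    {a : ι → ℝ → ℝ} {b β : ι → ℝ} {ψ : κ → ℝ → ℝ} {β' : κ → ℝ} {z h : ℝ → ℝ} {z₀ : ℝ}
    (hβ : Function.Injective β) (hb : b ≠ 0) (ha : ∀ j, IsVanishingSeries fun t ↦ a j t - b j)
    (hψ : ∀ k, IsVanishingSeries (ψ k)) (hz₀ : 0 < z₀) (hz : Tendsto z (𝓝[>] 0) (𝓝 z₀))
    (hroot : ∀ᶠ t in 𝓝[>] (0 : ℝ), ∑ j, a j t * z t ^ β j = 0)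
    (hh : ∀ᶠ t in 𝓝[>] (0 : ℝ), ContinuousAt h t)
    (hsum : ∀ᶠ t in 𝓝[>] (0 : ℝ), h t = ∑ k, ψ k t * z t ^ β' k) :
    (∀ᶠ t in 𝓝[>] (0 : ℝ), h t = 0) ∨ ∀ᶠ t in 𝓝[>] (0 : ℝ), h t ≠ 0 := by
  have hrpow (e : ℝ) := analyticAt_rpow_const hz₀ e
  have hanalytic : AnalyticAt ℝ (fun x : ℝ ↦ ∑ j, b j * x ^ β j) z₀ :=
    Finset.analyticAt_fun_sum _ fun j _ ↦ analyticAt_const.mul (hrpow _)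
  obtain ⟨d, g, hg, hg0, hfactor⟩ := hanalytic.exists_eventuallyEq_pow_smul_nonzero_iff.2
    fun h ↦ hb (eq_zero_of_eventually_sum_mul_rpow_eq_zero hβ hz₀ h)
  refine eventually_eq_zero_or_ne_zero_of_pow_add_sum_eq_zero (d := d) ha
    (fun j ↦ (hrpow (β j)).div hg hg0) hψ (fun k ↦ hrpow (β' k)) hz ?_ hh hsum
  filter_upwards [hz.eventually hfactor, hz.eventually (hg.continuousAt.eventually_ne hg0), hroot]
    with t hfactor hgt hroot
  simp only [smul_eq_mul] at hfactor
  calc (z t - z₀) ^ d + ∑ j, (a j t - b j) * (z t ^ β j / g (z t))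
    _ = ((z t - z₀) ^ d * g (z t) + ∑ j, (a j t - b j) * z t ^ β j) / g (z t) := by
        rw [add_div, mul_div_cancel_right₀ _ hgt, Finset.sum_div]
        simp only [mul_div_assoc]
    _ = 0 := by
        rw [← hfactor, ← Finset.sum_add_distrib]
        simp only [sub_mul, add_sub_cancel, hroot, zero_div]

lemma eventually_eq_zero_or_ne_zero_of_hasLeadingTerm_nonneg {ι κ : Type*} [Fintype ι] [Fintype κ]
    {a : ι → ℝ → ℝ} {ψ : κ → ℝ → ℝ} {e c β : ι → ℝ} {β' : κ → ℝ} {z h : ℝ → ℝ} {i₀ : ι} {u v : ℝ}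
    (ha : ∀ j, HasLeadingTerm (a j) (e j) (c j)) (he : ∀ j, 0 ≤ e j) (hi₀ : e i₀ = 0)
    (hc : c i₀ ≠ 0) (hβ : Function.Injective β) (hψ : ∀ k, IsVanishingSeries (ψ k))
    (hz : ∀ᶠ t in 𝓝[>] (0 : ℝ), ContinuousAt z t) (hu : 0 < u)
    (huv : ∃ᶠ t in 𝓝[>] (0 : ℝ), z t ∈ Icc u v)
    (hroot : ∀ᶠ t in 𝓝[>] (0 : ℝ), ∑ j, a j t * z t ^ β j = 0)
    (hh : ∀ᶠ t in 𝓝[>] (0 : ℝ), ContinuousAt h t)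
    (hsum : ∀ᶠ t in 𝓝[>] (0 : ℝ), h t = ∑ k, ψ k t * z t ^ β' k) :
    (∀ᶠ t in 𝓝[>] (0 : ℝ), h t = 0) ∨ ∀ᶠ t in 𝓝[>] (0 : ℝ), h t ≠ 0 := by
  have hb : (fun j ↦ if e j = 0 then c j else 0) ≠ 0 :=
    fun h ↦ hc <| by simpa [hi₀] using congrFun h i₀
  have ha' := fun j ↦ (ha j).isVanishingSeries_sub (he j)
  obtain ⟨z₀, hz₀, hzlim⟩ := exists_tendsto_of_sum_mul_rpow_eq_zero hβ hb
    (fun j ↦ tendsto_sub_nhds_zero_iff.1 (ha' j).tendsto) hz hroot hu huv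
  exact eventually_eq_zero_or_ne_zero_of_sum_mul_rpow_eq_zero hβ hb ha' hψ hz₀ hzlim hroot hh hsum

lemma eventually_continuousAt_rpow_const (s : ℝ) :
    ∀ᶠ t in 𝓝[>] (0 : ℝ), ContinuousAt (fun t : ℝ ↦ t ^ s) t :=
  eventually_mem_nhdsWithin.mono fun t ht ↦ Real.continuousAt_rpow_const t s (.inl ht.ne')

lemma rpow_eq_rpow_mul_mul_rpow_neg {t y : ℝ} (ht : 0 < t) (hy : 0 < y) (l q : ℝ) :
    y ^ q = t ^ (l * q) * (y * t ^ (-l)) ^ q := by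
  rw [Real.rpow_mul ht.le, ← Real.mul_rpow (by positivity) (by positivity), mul_left_comm,
    ← Real.rpow_add ht, add_neg_cancel, Real.rpow_zero, mul_one]

theorem eventually_eq_zero_or_ne_zero_of_hasLeadingTerm {ι κ : Type*} [Fintype ι] [Nonempty ι]
    [Fintype κ] {a : ι → ℝ → ℝ} {b : κ → ℝ → ℝ} {e c β : ι → ℝ} {e' c' β' : κ → ℝ} {Y h : ℝ → ℝ}
    (ha : ∀ j, HasLeadingTerm (a j) (e j) (c j)) (hc : ∀ j, c j ≠ 0) (hβ : Function.Injective β)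
    (hb : ∀ k, HasLeadingTerm (b k) (e' k) (c' k)) (hY : ∀ᶠ t in 𝓝[>] (0 : ℝ), 0 < Y t)
    (hYc : ∀ᶠ t in 𝓝[>] (0 : ℝ), ContinuousAt Y t)
    (hroot : ∀ᶠ t in 𝓝[>] (0 : ℝ), ∑ j, a j t * Y t ^ β j = 0)
    (hh : ∀ᶠ t in 𝓝[>] (0 : ℝ), ContinuousAt h t)
    (hsum : ∀ᶠ t in 𝓝[>] (0 : ℝ), h t = ∑ k, b k t * Y t ^ β' k) :
    (∀ᶠ t in 𝓝[>] (0 : ℝ), h t = 0) ∨ ∀ᶠ t in 𝓝[>] (0 : ℝ), h t ≠ 0 := by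
  obtain ⟨l, u, v, hu, huv⟩ := exists_frequently_mul_rpow_neg_mem_Icc ha hc hβ hY hroot
  set z : ℝ → ℝ := fun t ↦ Y t * t ^ (-l)
  have hz : ∀ᶠ t in 𝓝[>] (0 : ℝ), ContinuousAt z t :=
    (hYc.and (eventually_continuousAt_rpow_const _)).mono fun t ht ↦ ht.1.mul ht.2
  have hYz : ∀ᶠ t in 𝓝[>] (0 : ℝ), 0 < t ∧ ∀ q, Y t ^ q = t ^ (l * q) * z t ^ q := by
    filter_upwards [hY, self_mem_nhdsWithin] with t hYt ht
    exact ⟨ht, rpow_eq_rpow_mul_mul_rpow_neg ht hYt l⟩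
  obtain ⟨i₀, hi₀⟩ := Finite.exists_min fun j ↦ e j + l * β j
  obtain ⟨N, hN⟩ : ∃ N, ∀ k, 0 < l * β' k + N + e' k := by
    obtain ⟨N, hN⟩ := (finite_range fun k ↦ -(e' k + l * β' k)).bddAbove
    exact ⟨N + 1, fun k ↦ by linarith [hN (mem_range_self k)]⟩
  set μ := e i₀ + l * β i₀ with hμ
  have hroot' : ∀ᶠ t in 𝓝[>] (0 : ℝ), ∑ j, t ^ (l * β j - μ) * a j t * z t ^ β j = 0 := by
    filter_upwards [hroot, hYz] with t hroot ⟨ht, hYz⟩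
    rw [← mul_zero (t ^ (-μ)), ← hroot, Finset.mul_sum]
    refine Finset.sum_congr rfl fun j _ ↦ ?_
    rw [hYz, sub_eq_neg_add, Real.rpow_add ht]
    ring
  have hsum' : ∀ᶠ t in 𝓝[>] (0 : ℝ),
      t ^ N * h t = ∑ k, t ^ (l * β' k + N) * b k t * z t ^ β' k := by
    filter_upwards [hsum, hYz] with t hsum ⟨ht, hYz⟩
    rw [hsum, Finset.mul_sum]
    refine Finset.sum_congr rfl fun k _ ↦ ?_
    rw [hYz, Real.rpow_add ht]
    ring
  have hiff : ∀ᶠ t in 𝓝[>] (0 : ℝ), t ^ N * h t = 0 ↔ h t = 0 :=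
    eventually_mem_nhdsWithin.mono fun t ht ↦ mul_eq_zero_iff_left (Real.rpow_pos_of_pos ht N).ne'
  refine (eventually_eq_zero_or_ne_zero_of_hasLeadingTerm_nonneg (i₀ := i₀)
    (fun j ↦ (ha j).rpow_mul (l * β j - μ)) (fun j ↦ by linarith [hi₀ j, hμ]) (by linarith [hμ])
    (hc i₀) hβ
    (fun k ↦ ((hb k).rpow_mul (l * β' k + N)).isVanishingSeries (hN k)) hz hu huv hroot'
    (((eventually_continuousAt_rpow_const N).and hh).mono fun t ht ↦ ht.1.mul ht.2) hsum').imp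
    (fun h ↦ ?_) fun h ↦ ?_
  · filter_upwards [h, hiff] with t h hiff using hiff.1 h
  · filter_upwards [h, hiff] with t h hiff using mt hiff.2 h

end Newton

section Signomial

/-- The one-variable generalized polynomial with coefficient `f e` at `x ^ e`. -/
def signomial (f : ℝ →₀ ℝ) (x : ℝ) : ℝ := f.sum fun e c ↦ c * x ^ e

/-- The two-variable generalized polynomial with coefficient `f (e, β)` at `x ^ e * y ^ β`; unlike
`IsGenPoly2`, this encoding fixes the coefficients and exponents. -/
def signomial₂ (f : ℝ × ℝ →₀ ℝ) (x y : ℝ) : ℝ := f.sum fun α c ↦ c * x ^ α.1 * y ^ α.2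

/-- The coefficients, themselves one-variable in `x`, of a two-variable generalized polynomial
viewed as a generalized polynomial in `y`. -/
def yCoeffs (f : ℝ × ℝ →₀ ℝ) : ℝ →₀ ℝ →₀ ℝ :=
  (f.equivMapDomain (Equiv.prodComm ℝ ℝ)).curry

lemma signomial₂_eq_sum_yCoeffs (f : ℝ × ℝ →₀ ℝ) (x y : ℝ) :
    signomial₂ f x y = ∑ β ∈ (yCoeffs f).support, signomial (yCoeffs f β) x * y ^ β := by
  have h := Finsupp.sum_curry_index (f.equivMapDomain (Equiv.prodComm ℝ ℝ))
    (fun β e c ↦ c * x ^ e * y ^ β)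
  rw [Finsupp.sum_equivMapDomain] at h
  refine h.symm.trans (Finset.sum_congr rfl fun β _ ↦ ?_)
  rw [signomial, Finsupp.sum_mul]
  rfl

lemma continuousAt_signomial₂ (g : ℝ × ℝ →₀ ℝ) {X Y : ℝ → ℝ} {t : ℝ} (hX : ContinuousAt X t)
    (hY : ContinuousAt Y t) (hX0 : 0 < X t) (hY0 : 0 < Y t) :
    ContinuousAt (fun t ↦ signomial₂ g (X t) (Y t)) t :=
  tendsto_finsetSum _ fun α _ ↦ ((hX.rpow_const (.inl hX0.ne')).const_mul (g α)).mul
    (hY.rpow_const (.inl hY0.ne'))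

/-- A curve germ `X` at `0⁺` along which every one-variable generalized polynomial either vanishes
identically or has a nonzero leading term. -/
def IsSignomialChart (X : ℝ → ℝ) : Prop :=
  ∀ f : ℝ →₀ ℝ, (∀ᶠ t in 𝓝[>] (0 : ℝ), signomial f (X t) = 0) ∨
    ∃ κ k, k ≠ 0 ∧ HasLeadingTerm (fun t ↦ signomial f (X t)) κ k

lemma isSignomialChart_id : IsSignomialChart fun t ↦ t := by
  intro f
  rcases f.support.eq_empty_or_nonempty with h | h
  · simp [Finsupp.support_eq_empty.1 h, signomial]
  right
  set κ := f.support.min' h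
  have hκ : κ ∈ f.support := f.support.min'_mem h
  refine ⟨κ, f κ, Finsupp.mem_support_iff.1 hκ,
    fun t ↦ ∑ e ∈ f.support.erase κ, f e * t ^ (e - κ), ?_, ?_⟩
  · refine IsVanishingSeries.sum fun e he ↦ (IsVanishingSeries.rpow ?_).const_mul (f e)
    exact sub_pos.2 (f.support.min'_lt_of_mem_erase_min' h he)
  · filter_upwards [self_mem_nhdsWithin] with t ht
    have hterm (e : ℝ) : f e * t ^ e = t ^ κ * (f e * t ^ (e - κ)) := by
      rw [mul_left_comm, ← Real.rpow_add ht, add_sub_cancel]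
    rw [signomial, Finsupp.sum, ← Finset.add_sum_erase _ _ hκ, mul_add, mul_comm (f κ),
      Finset.mul_sum, Finset.sum_congr rfl fun e _ ↦ hterm e]

lemma isSignomialChart_inv : IsSignomialChart fun t ↦ t⁻¹ := by
  intro f
  have h : ∀ᶠ t in 𝓝[>] (0 : ℝ),
      signomial f t⁻¹ = signomial (f.equivMapDomain (Equiv.neg ℝ)) t := by
    filter_upwards [self_mem_nhdsWithin] with t ht
    replace ht : 0 < t := ht
    simp_rw [signomial, Finsupp.sum_equivMapDomain, Equiv.neg_apply, Real.inv_rpow ht.le,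
      Real.rpow_neg ht.le]
  refine (isSignomialChart_id (f.equivMapDomain (Equiv.neg ℝ))).imp (fun h0 ↦ ?_) ?_
  · exact (h.and h0).mono fun t ht ↦ ht.1.trans ht.2
  · rintro ⟨κ, k, hk, φ, hφ, hlead⟩
    exact ⟨κ, k, hk, φ, hφ, (h.and hlead).mono fun t ht ↦ ht.1.trans ht.2⟩

lemma isSignomialChart_of_analyticAt {X : ℝ → ℝ} (hX : AnalyticAt ℝ X 0) (h0 : 0 < X 0) :
    IsSignomialChart X := by
  intro f
  have han : AnalyticAt ℝ (fun t ↦ signomial f (X t)) 0 :=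
    Finset.analyticAt_fun_sum _ fun e _ ↦
      analyticAt_const.mul ((analyticAt_rpow_const h0 e).comp hX)
  by_cases hz : ∀ᶠ t in 𝓝 (0 : ℝ), signomial f (X t) = 0
  · exact .inl (hz.filter_mono nhdsWithin_le_nhds)
  obtain ⟨n, g, hg, hg0, hgn⟩ := han.exists_eventuallyEq_pow_smul_nonzero_iff.2 hz
  refine .inr ⟨n, g 0, hg0, fun t ↦ g t - g 0,
    .of_analyticAt (hg.sub analyticAt_const) (sub_self _), ?_⟩
  filter_upwards [hgn.filter_mono nhdsWithin_le_nhds] with t ht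
  rw [ht, Real.rpow_natCast, sub_zero, smul_eq_mul, add_sub_cancel]

lemma IsSignomialChart.exists_hasLeadingTerm {X : ℝ → ℝ} (hX : IsSignomialChart X) (f : ℝ →₀ ℝ) :
    ∃ κ k, HasLeadingTerm (fun t ↦ signomial f (X t)) κ k := by
  rcases hX f with h | ⟨κ, k, -, h⟩
  · exact ⟨0, 0, fun _ ↦ 0, .zero, by simpa using h⟩
  · exact ⟨κ, k, h⟩

lemma IsSignomialChart.eventually_eq_zero_or_ne_zero {X Y : ℝ → ℝ} (hX : IsSignomialChart X)
    {f : ℝ × ℝ →₀ ℝ} (g : ℝ × ℝ →₀ ℝ) (hXc : ∀ᶠ t in 𝓝[>] (0 : ℝ), 0 < X t ∧ ContinuousAt X t)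
    (hYc : ∀ᶠ t in 𝓝[>] (0 : ℝ), 0 < Y t ∧ ContinuousAt Y t)
    (hroot : ∀ᶠ t in 𝓝[>] (0 : ℝ), signomial₂ f (X t) (Y t) = 0)
    (hf : ∃ᶠ t in 𝓝[>] (0 : ℝ), ∃ y, signomial₂ f (X t) y ≠ 0) :
    (∀ᶠ t in 𝓝[>] (0 : ℝ), signomial₂ g (X t) (Y t) = 0) ∨
      ∀ᶠ t in 𝓝[>] (0 : ℝ), signomial₂ g (X t) (Y t) ≠ 0 := by
  classical
  set E := (yCoeffs f).support.filter fun β ↦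
    ¬ ∀ᶠ t in 𝓝[>] (0 : ℝ), signomial (yCoeffs f β) (X t) = 0 with hE
  have hfE : ∀ᶠ t in 𝓝[>] (0 : ℝ), ∀ y, signomial₂ f (X t) y =
      ∑ β : E, signomial (yCoeffs f β) (X t) * y ^ (β : ℝ) := by
    have : ∀ᶠ t in 𝓝[>] (0 : ℝ), ∀ β ∈ (yCoeffs f).support, β ∉ E →
        signomial (yCoeffs f β) (X t) = 0 :=
      (Finset.eventually_all _).2 fun β hβ ↦ eventually_imp_distrib_left.2 fun hβE ↦ by
        simpa [hE, Finsupp.mem_support_iff.1 hβ] using hβE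
    filter_upwards [this] with t ht y
    rw [signomial₂_eq_sum_yCoeffs,
      Finset.sum_coe_sort E fun β ↦ signomial (yCoeffs f β) (X t) * y ^ β]
    refine (Finset.sum_subset (Finset.filter_subset _ _) fun β hβ hβE ↦ ?_).symm
    rw [ht β hβ hβE, zero_mul]
  have hne : Nonempty E := by
    by_contra hempty
    rw [not_nonempty_iff] at hempty
    obtain ⟨t, ⟨y, hy⟩, ht⟩ := (hf.and_eventually hfE).exists
    exact hy ((ht y).trans (Fintype.sum_empty _))
  choose e c hc ha using fun β : E ↦
    (hX (yCoeffs f β)).resolve_left (Finset.mem_filter.1 β.2).2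
  choose e' c' hb using fun β : (yCoeffs g).support ↦ hX.exists_hasLeadingTerm (yCoeffs g β)
  refine eventually_eq_zero_or_ne_zero_of_hasLeadingTerm (β' := (↑)) ha hc Subtype.val_injective hb
    (hYc.mono fun t ht ↦ ht.1) (hYc.mono fun t ht ↦ ht.2) ?_ ?_ (.of_forall fun t ↦ ?_)
  · filter_upwards [hfE, hroot] with t hfE hroot using (hfE _).symm.trans hroot
  · filter_upwards [hXc, hYc] with t hX hY using
      continuousAt_signomial₂ g hX.2 hY.2 hX.1 hY.1
  · rw [signomial₂_eq_sum_yCoeffs]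
    exact (Finset.sum_coe_sort _ fun β ↦ signomial (yCoeffs g β) (X t) * Y t ^ β).symm

lemma IsSignomialChart.eventuallyConst_sign {X Y : ℝ → ℝ} (hX : IsSignomialChart X)
    {f : ℝ × ℝ →₀ ℝ} (g : ℝ × ℝ →₀ ℝ) (hXc : ∀ᶠ t in 𝓝[>] (0 : ℝ), 0 < X t ∧ ContinuousAt X t)
    (hYc : ∀ᶠ t in 𝓝[>] (0 : ℝ), 0 < Y t ∧ ContinuousAt Y t)
    (hroot : ∀ᶠ t in 𝓝[>] (0 : ℝ), signomial₂ f (X t) (Y t) = 0)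
    (hf : ∃ᶠ t in 𝓝[>] (0 : ℝ), ∃ y, signomial₂ f (X t) y ≠ 0) :
    EventuallyConst (fun t ↦ SignType.sign (signomial₂ g (X t) (Y t))) (𝓝[>] 0) := by
  rw [eventuallyConst_iff_exists_eventuallyEq]
  rcases hX.eventually_eq_zero_or_ne_zero g hXc hYc hroot hf with h | h
  · exact ⟨0, h.mono fun t ht ↦ sign_eq_zero_iff.2 ht⟩
  have hcont : ∀ᶠ t in 𝓝[>] (0 : ℝ), ContinuousAt (fun t ↦ signomial₂ g (X t) (Y t)) t := by
    filter_upwards [hXc, hYc] with t hX hY using continuousAt_signomial₂ g hX.2 hY.2 hX.1 hY.1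
  rcases eventually_pos_or_neg_of_ne_zero hcont h with h | h
  · exact ⟨1, h.mono fun t ht ↦ sign_pos ht⟩
  · exact ⟨-1, h.mono fun t ht ↦ sign_neg ht⟩

/-- `ξ` is a continuous branch over `I` of the zero set of `signomial₂ f` in the open quadrant,
and this zero set has finite fibres over `I`. -/
structure IsRootBranch (I : Set ℝ) (f : ℝ × ℝ →₀ ℝ) (ξ : ℝ → ℝ) : Prop where
  isOpen : IsOpen I
  pos_of_mem : ∀ x ∈ I, 0 < x
  continuousOn : ContinuousOn ξ I
  pos : ∀ x ∈ I, 0 < ξ x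
  root : ∀ x ∈ I, signomial₂ f x (ξ x) = 0
  finite : ∀ x ∈ I, {y | 0 < y ∧ signomial₂ f x y = 0}.Finite

namespace IsRootBranch

variable {I : Set ℝ} {f : ℝ × ℝ →₀ ℝ} {ξ : ℝ → ℝ}

lemma exists_ne_zero (h : IsRootBranch I f ξ) {x : ℝ} (hx : x ∈ I) :
    ∃ y, signomial₂ f x y ≠ 0 := by
  obtain ⟨y, hy, hyf⟩ := (Ioi_infinite (0 : ℝ)).exists_notMem_finite (h.finite x hx)
  exact ⟨y, fun h0 ↦ hyf ⟨hy, h0⟩⟩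

lemma eventuallyConst_sign_map (h : IsRootBranch I f ξ) (g : ℝ × ℝ →₀ ℝ) {X : ℝ → ℝ}
    (hX : IsSignomialChart X) (hXc : ∀ᶠ t in 𝓝[>] (0 : ℝ), ContinuousAt X t)
    (hI : ∀ᶠ x in map X (𝓝[>] 0), x ∈ I) :
    EventuallyConst (fun x ↦ SignType.sign (signomial₂ g x (ξ x))) (map X (𝓝[>] 0)) :=
  hX.eventuallyConst_sign g
    ((hXc.and hI).mono fun _ ht ↦ ⟨h.pos_of_mem _ ht.2, ht.1⟩)
    ((hXc.and hI).mono fun _ ht ↦ ⟨h.pos _ ht.2, ContinuousAt.comp'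
      (h.continuousOn.continuousAt (h.isOpen.mem_nhds ht.2)) ht.1⟩)
    (hI.mono fun _ ht ↦ h.root _ ht)
    (hI.mono fun _ ht ↦ h.exists_ne_zero ht).frequently

lemma eventuallyConst_sign_nhdsGT (h : IsRootBranch I f ξ) (g : ℝ × ℝ →₀ ℝ) {a : ℝ}
    (ha : 0 ≤ a) (hI : ∀ᶠ x in 𝓝[>] a, x ∈ I) :
    EventuallyConst (fun x ↦ SignType.sign (signomial₂ g x (ξ x))) (𝓝[>] a) := by
  have hX : IsSignomialChart (a + ·) := by
    rcases ha.eq_or_lt with rfl | ha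
    · simpa using isSignomialChart_id
    · exact isSignomialChart_of_analyticAt (analyticAt_const.add analyticAt_id) (by simpa)
  have hmap : map (a + ·) (𝓝[>] 0) = 𝓝[>] a := by simp
  rw [← hmap] at hI ⊢
  exact h.eventuallyConst_sign_map g hX (.of_forall fun t ↦ by fun_prop) hI

lemma eventuallyConst_sign_nhdsLT (h : IsRootBranch I f ξ) (g : ℝ × ℝ →₀ ℝ) {a : ℝ}
    (ha : 0 < a) (hI : ∀ᶠ x in 𝓝[<] a, x ∈ I) :
    EventuallyConst (fun x ↦ SignType.sign (signomial₂ g x (ξ x))) (𝓝[<] a) := by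
  have hX : IsSignomialChart (a - ·) :=
    isSignomialChart_of_analyticAt (analyticAt_const.sub analyticAt_id) (by simpa)
  have hmap : map (a - ·) (𝓝[>] 0) = 𝓝[<] a := by simp
  rw [← hmap] at hI ⊢
  exact h.eventuallyConst_sign_map g hX (.of_forall fun t ↦ by fun_prop) hI

lemma eventuallyConst_sign_atTop (h : IsRootBranch I f ξ) (g : ℝ × ℝ →₀ ℝ)
    (hI : ∀ᶠ x in atTop, x ∈ I) :
    EventuallyConst (fun x ↦ SignType.sign (signomial₂ g x (ξ x))) atTop := by
  have hmap : map (fun t : ℝ ↦ t⁻¹) (𝓝[>] 0) = atTop := inv_nhdsGT_zero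
  rw [← hmap] at hI ⊢
  exact h.eventuallyConst_sign_map g isSignomialChart_inv
    (eventually_mem_nhdsWithin.mono fun t ht ↦ continuousAt_inv₀ ht.ne') hI

end IsRootBranch

end Signomial

section Semialgebraic

lemma signomial₂_single (α : ℝ × ℝ) (c x y : ℝ) :
    signomial₂ (Finsupp.single α c) x y = c * x ^ α.1 * y ^ α.2 :=
  Finsupp.sum_single_index (by simp)

lemma signomial₂_add (f g : ℝ × ℝ →₀ ℝ) (x y : ℝ) :
    signomial₂ (f + g) x y = signomial₂ f x y + signomial₂ g x y :=
  Finsupp.sum_add_index' (by simp) fun _ _ _ ↦ by ring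

lemma isGenPoly2_iff {a : ℝ → ℝ → ℝ} :
    IsGenPoly2 a ↔ ∃ f, ∀ x y, 0 < x → 0 < y → a x y = signomial₂ f x y := by
  constructor
  · rintro ⟨m, c, α, -, hα, h⟩
    refine ⟨(Finsupp.equivFunOnFinite.symm c).embDomain ⟨α, hα⟩, fun x y hx hy ↦ ?_⟩
    rw [h x y hx hy, signomial₂, Finsupp.sum_embDomain, Finsupp.sum_fintype _ _ (by simp)]
    rfl
  · rintro ⟨f, h⟩
    let e := f.support.equivFin.symm
    refine ⟨f.support.card, fun i ↦ f (e i), fun i ↦ e i,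
      fun i ↦ Finsupp.mem_support_iff.1 (e i).2, Subtype.val_injective.comp e.injective,
      fun x y hx hy ↦ ?_⟩
    rw [h x y hx hy, e.sum_comp fun α : f.support ↦ f α * x ^ (α : ℝ × ℝ).1 * y ^ (α : ℝ × ℝ).2]
    exact (Finset.sum_coe_sort f.support fun α ↦ f α * x ^ α.1 * y ^ α.2).symm

lemma isGenPoly2_signomial₂ (f : ℝ × ℝ →₀ ℝ) : IsGenPoly2 (signomial₂ f) :=
  isGenPoly2_iff.2 ⟨f, fun _ _ _ _ ↦ rfl⟩

lemma isGenPoly2_monomial (c : ℝ) (α : ℝ × ℝ) : IsGenPoly2 fun x y ↦ c * x ^ α.1 * y ^ α.2 :=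
  isGenPoly2_iff.2 ⟨.single α c, fun x y _ _ ↦ (signomial₂_single α c x y).symm⟩

lemma isGenPoly2_const (c : ℝ) : IsGenPoly2 fun _ _ ↦ c := by
  simpa using isGenPoly2_monomial c (0, 0)

lemma isGenPoly2_fst : IsGenPoly2 fun x _ ↦ x := by
  simpa using isGenPoly2_monomial 1 (1, 0)

lemma _root_.IsGenPoly2.congr {a b : ℝ → ℝ → ℝ} (ha : IsGenPoly2 a)
    (h : ∀ x y, 0 < x → 0 < y → b x y = a x y) : IsGenPoly2 b := by
  obtain ⟨f, hf⟩ := isGenPoly2_iff.1 ha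
  exact isGenPoly2_iff.2 ⟨f, fun x y hx hy ↦ (h x y hx hy).trans (hf x y hx hy)⟩

lemma _root_.IsGenPoly2.add {a b : ℝ → ℝ → ℝ} (ha : IsGenPoly2 a) (hb : IsGenPoly2 b) :
    IsGenPoly2 fun x y ↦ a x y + b x y := by
  obtain ⟨f, hf⟩ := isGenPoly2_iff.1 ha
  obtain ⟨g, hg⟩ := isGenPoly2_iff.1 hb
  exact isGenPoly2_iff.2 ⟨f + g, fun x y hx hy ↦ by rw [hf x y hx hy, hg x y hx hy, signomial₂_add]⟩

lemma isGenPoly2_sum {ι : Type*} (s : Finset ι) {a : ι → ℝ → ℝ → ℝ}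
    (ha : ∀ i ∈ s, IsGenPoly2 (a i)) : IsGenPoly2 fun x y ↦ ∑ i ∈ s, a i x y := by
  classical
  induction s using Finset.induction_on with
  | empty => simpa using isGenPoly2_const 0
  | insert i s hi ih =>
    simp only [Finset.sum_insert hi]
    exact (ha i (Finset.mem_insert_self i s)).add
      (ih fun j hj ↦ ha j (Finset.mem_insert_of_mem hj))

lemma _root_.IsGenPoly2.mul {a b : ℝ → ℝ → ℝ} (ha : IsGenPoly2 a) (hb : IsGenPoly2 b) :
    IsGenPoly2 fun x y ↦ a x y * b x y := by
  obtain ⟨f, hf⟩ := isGenPoly2_iff.1 ha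
  obtain ⟨g, hg⟩ := isGenPoly2_iff.1 hb
  refine (isGenPoly2_sum (f.support ×ˢ g.support) fun p _ ↦
    isGenPoly2_monomial (f p.1 * g p.2) (p.1 + p.2)).congr fun x y hx hy ↦ ?_
  rw [hf x y hx hy, hg x y hx hy, signomial₂, signomial₂, Finsupp.sum, Finsupp.sum,
    Finset.sum_mul_sum, ← Finset.sum_product']
  refine Finset.sum_congr rfl fun p _ ↦ ?_
  rw [Prod.fst_add, Prod.snd_add, Real.rpow_add hx, Real.rpow_add hy]
  ring

lemma _root_.IsGenPoly2.neg {a : ℝ → ℝ → ℝ} (ha : IsGenPoly2 a) :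
    IsGenPoly2 fun x y ↦ -a x y := by
  simpa using (isGenPoly2_const (-1)).mul ha

lemma isGSA2_iUnion_of_isBasicGSA2 {ι : Type*} [Finite ι] {T : ι → Set (ℝ × ℝ)}
    (h : ∀ i, IsBasicGSA2 (T i)) : IsGSA2 (⋃ i, T i) := by
  obtain ⟨n, ⟨e⟩⟩ := Finite.exists_equiv_fin ι
  exact ⟨n, fun j ↦ T (e.symm j), fun j ↦ h _, (e.symm.surjective.iUnion_comp T).symm⟩

lemma isGSA2_iUnion {ι : Type*} [Finite ι] {T : ι → Set (ℝ × ℝ)} (h : ∀ i, IsGSA2 (T i)) :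
    IsGSA2 (⋃ i, T i) := by
  choose J S hS hT using h
  simp only [hT, ← iUnion_sigma fun p : Σ i, Fin (J i) ↦ S p.1 p.2]
  exact isGSA2_iUnion_of_isBasicGSA2 fun p ↦ hS p.1 p.2

lemma _root_.IsBasicGSA2.isGSA2 {S : Set (ℝ × ℝ)} (h : IsBasicGSA2 S) : IsGSA2 S :=
  ⟨1, fun _ ↦ S, fun _ ↦ h, (iUnion_const S).symm⟩

lemma isGSA2_empty : IsGSA2 ∅ := ⟨0, Fin.elim0, fun j ↦ j.elim0, by simp⟩

lemma _root_.IsGSA2.union {A B : Set (ℝ × ℝ)} (hA : IsGSA2 A) (hB : IsGSA2 B) :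
    IsGSA2 (A ∪ B) := by
  rw [union_eq_iUnion]
  exact isGSA2_iUnion (Bool.rec hB hA)

lemma _root_.IsBasicGSA2.inter {A B : Set (ℝ × ℝ)} (hA : IsBasicGSA2 A) (hB : IsBasicGSA2 B) :
    IsBasicGSA2 (A ∩ B) := by
  obtain ⟨f, K, g, hf, hg, rfl⟩ := hA
  obtain ⟨f', K', g', hf', hg', rfl⟩ := hB
  refine ⟨fun x y ↦ f x y * f x y + f' x y * f' x y, K + K', Fin.append g g',
    (hf.mul hf).add (hf'.mul hf'), Fin.addCases (by simpa) (by simpa), ?_⟩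
  ext q
  simp only [mem_inter_iff, mem_ofPred_eq, mul_self_add_mul_self_eq_zero, Fin.forall_fin_add,
    Fin.append_left, Fin.append_right]
  tauto

lemma _root_.IsGSA2.inter {A B : Set (ℝ × ℝ)} (hA : IsGSA2 A) (hB : IsGSA2 B) :
    IsGSA2 (A ∩ B) := by
  obtain ⟨J, S, hS, rfl⟩ := hA
  obtain ⟨J', S', hS', rfl⟩ := hB
  rw [iUnion_inter_iUnion, ← iUnion_prod' fun p : Fin J × Fin J' ↦ S p.1 ∩ S' p.2]
  exact isGSA2_iUnion_of_isBasicGSA2 fun p ↦ (hS p.1).inter (hS' p.2)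

lemma isGSA2_setOf_eq_zero {a : ℝ → ℝ → ℝ} (ha : IsGenPoly2 a) :
    IsGSA2 {q : ℝ × ℝ | 0 < q.1 ∧ 0 < q.2 ∧ a q.1 q.2 = 0} :=
  IsBasicGSA2.isGSA2 ⟨a, 0, Fin.elim0, ha, fun k ↦ k.elim0, by simp⟩

lemma isGSA2_setOf_pos {a : ℝ → ℝ → ℝ} (ha : IsGenPoly2 a) :
    IsGSA2 {q : ℝ × ℝ | 0 < q.1 ∧ 0 < q.2 ∧ 0 < a q.1 q.2} :=
  IsBasicGSA2.isGSA2 ⟨fun _ _ ↦ 0, 1, fun _ ↦ a, isGenPoly2_const 0, fun _ ↦ ha, by simp⟩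

lemma isGSA2_setOf_sign_eq {a : ℝ → ℝ → ℝ} (ha : IsGenPoly2 a) (σ : SignType) :
    IsGSA2 {q : ℝ × ℝ | 0 < q.1 ∧ 0 < q.2 ∧ SignType.sign (a q.1 q.2) = σ} := by
  cases σ with
  | zero => simpa using isGSA2_setOf_eq_zero ha
  | neg => simpa [sign_eq_neg_one_iff] using isGSA2_setOf_pos ha.neg
  | pos => simpa [sign_eq_one_iff] using isGSA2_setOf_pos ha

/-- The vertical cylinder over `T` in the open quadrant is generalized semialgebraic; equivalently,
the positive part of `T` is a generalized semialgebraic subset of the line. -/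
def IsGSA1 (T : Set ℝ) : Prop := IsGSA2 {q : ℝ × ℝ | 0 < q.1 ∧ 0 < q.2 ∧ q.1 ∈ T}

lemma isGSA1_empty : IsGSA1 ∅ := by simpa [IsGSA1] using isGSA2_empty

namespace IsGSA1

variable {A B : Set ℝ}

lemma congr (hA : IsGSA1 A) (h : ∀ x > 0, x ∈ B ↔ x ∈ A) : IsGSA1 B := by
  have : {q : ℝ × ℝ | 0 < q.1 ∧ 0 < q.2 ∧ q.1 ∈ B} = {q | 0 < q.1 ∧ 0 < q.2 ∧ q.1 ∈ A} :=
    ext fun q ↦ and_congr_right fun hq ↦ and_congr_right fun _ ↦ h q.1 hq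
  rwa [IsGSA1, this]

lemma union (hA : IsGSA1 A) (hB : IsGSA1 B) : IsGSA1 (A ∪ B) := by
  simpa only [IsGSA1, mem_union, and_or_left, ofPred_or] using IsGSA2.union hA hB

lemma inter (hA : IsGSA1 A) (hB : IsGSA1 B) : IsGSA1 (A ∩ B) := by
  refine (congrArg IsGSA2 (ext fun q ↦ ?_)).mpr (IsGSA2.inter hA hB)
  simp only [mem_inter_iff, mem_ofPred_eq]
  tauto

end IsGSA1

lemma isGSA1_Ioi (a : ℝ) : IsGSA1 (Ioi a) := by
  simpa [IsGSA1] using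
    isGSA2_setOf_pos (isGenPoly2_fst.add (isGenPoly2_const (-a)))

lemma isGSA1_Iio (a : ℝ) : IsGSA1 (Iio a) := by
  simpa [IsGSA1] using
    isGSA2_setOf_pos ((isGenPoly2_const a).add isGenPoly2_fst.neg)

lemma isGSA1_singleton (a : ℝ) : IsGSA1 {a} := by
  simpa [IsGSA1, add_neg_eq_zero] using
    isGSA2_setOf_eq_zero (isGenPoly2_fst.add (isGenPoly2_const (-a)))

lemma isGSA1_Ioo (a b : ℝ) : IsGSA1 (Ioo a b) := (isGSA1_Ioi a).inter (isGSA1_Iio b)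

lemma IsGSA1.inter_of_forall {T U : Set ℝ} (hU : IsGSA1 U)
    (h : (∀ x ∈ U, x ∈ T) ∨ ∀ x ∈ U, x ∉ T) : IsGSA1 (T ∩ U) := by
  rcases h with h | h
  · rwa [inter_eq_right.2 h]
  · simpa [disjoint_iff_inter_eq_empty.1 (disjoint_right.2 h)] using isGSA1_empty

lemma exists_gt_isGSA1_inter_Ioo {T : Set ℝ} {a : ℝ} (h : EventuallyConst T (𝓝[>] a)) :
    ∃ v > a, IsGSA1 (T ∩ Ioo a v) := by
  have : ∃ v > a, (∀ x ∈ Ioo a v, x ∈ T) ∨ ∀ x ∈ Ioo a v, x ∉ T := by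
    rcases eventuallyConst_set.1 h with h | h
    · exact (mem_nhdsGT_iff_exists_Ioo_subset.1 h).imp fun v hv ↦ ⟨hv.1, .inl hv.2⟩
    · exact (mem_nhdsGT_iff_exists_Ioo_subset.1 h).imp fun v hv ↦ ⟨hv.1, .inr hv.2⟩
  exact this.imp fun v hv ↦ ⟨hv.1, (isGSA1_Ioo a v).inter_of_forall hv.2⟩

lemma exists_lt_isGSA1_inter_Ioo {T : Set ℝ} {a : ℝ} (h : EventuallyConst T (𝓝[<] a)) :
    ∃ u < a, IsGSA1 (T ∩ Ioo u a) := by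
  have : ∃ u < a, (∀ x ∈ Ioo u a, x ∈ T) ∨ ∀ x ∈ Ioo u a, x ∉ T := by
    rcases eventuallyConst_set.1 h with h | h
    · exact (mem_nhdsLT_iff_exists_Ioo_subset.1 h).imp fun u hu ↦ ⟨hu.1, .inl hu.2⟩
    · exact (mem_nhdsLT_iff_exists_Ioo_subset.1 h).imp fun u hu ↦ ⟨hu.1, .inr hu.2⟩
  exact this.imp fun u hu ↦ ⟨hu.1, (isGSA1_Ioo u a).inter_of_forall hu.2⟩

lemma exists_isGSA1_inter_Ioi {T : Set ℝ} (h : EventuallyConst T atTop) :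
    ∃ M, IsGSA1 (T ∩ Ioi M) := by
  have : ∃ M, (∀ x ∈ Ioi M, x ∈ T) ∨ ∀ x ∈ Ioi M, x ∉ T := by
    rcases eventuallyConst_set.1 h with h | h
    · exact (eventually_atTop.1 h).imp fun M hM ↦ .inl fun x hx ↦ hM x (le_of_lt hx)
    · exact (eventually_atTop.1 h).imp fun M hM ↦ .inr fun x hx ↦ hM x (le_of_lt hx)
  exact this.imp fun M hM ↦ (isGSA1_Ioi M).inter_of_forall hM

lemma exists_mem_nhds_isGSA1_inter {T : Set ℝ} {a : ℝ} (ha : 0 ≤ a)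
    (hr : EventuallyConst T (𝓝[>] a)) (hl : 0 < a → EventuallyConst T (𝓝[<] a)) :
    ∃ U ∈ 𝓝 a, IsGSA1 (T ∩ U) := by
  obtain ⟨v, hav, hv⟩ := exists_gt_isGSA1_inter_Ioo hr
  obtain ⟨u, hua, hu⟩ : ∃ u < a, IsGSA1 (T ∩ Ioo u a) := by
    rcases ha.eq_or_lt with rfl | ha
    · exact ⟨-1, by simp, isGSA1_empty.congr fun x hx ↦ by simp [hx.le]⟩
    · exact exists_lt_isGSA1_inter_Ioo (hl ha)
  have hsing : IsGSA1 (T ∩ {a}) :=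
    (isGSA1_singleton a).inter_of_forall (by simpa using em (a ∈ T))
  refine ⟨Ioo u v, Ioo_mem_nhds hua hav, ?_⟩
  rw [← Ioc_union_Ioo_eq_Ioo hua.le hav, ← Ioo_union_right hua, inter_union_distrib_left,
    inter_union_distrib_left]
  exact (hu.union hsing).union hv

theorem isGSA1_of_eventuallyConst {T : Set ℝ} (hr : ∀ a ≥ 0, EventuallyConst T (𝓝[>] a))
    (hl : ∀ a > 0, EventuallyConst T (𝓝[<] a)) (htop : EventuallyConst T atTop) : IsGSA1 T := by
  obtain ⟨M, hM⟩ := exists_isGSA1_inter_Ioi htop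
  obtain ⟨U, hU, hTU⟩ : ∃ U, Icc 0 M ⊆ U ∧ IsGSA1 (T ∩ U) := by
    refine isCompact_Icc.induction_on (p := fun s ↦ ∃ U, s ⊆ U ∧ IsGSA1 (T ∩ U))
      ⟨∅, subset_rfl, by simpa using isGSA1_empty⟩ ?_ ?_ fun a ha ↦ ?_
    · exact fun s t hst ⟨U, htU, hU⟩ ↦ ⟨U, hst.trans htU, hU⟩
    · rintro s t ⟨U, hsU, hU⟩ ⟨V, htV, hV⟩
      exact ⟨U ∪ V, union_subset_union hsU htV, by
        simpa only [inter_union_distrib_left] using hU.union hV⟩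
    · obtain ⟨U, haU, hU⟩ := exists_mem_nhds_isGSA1_inter ha.1 (hr a ha.1) (hl a)
      exact ⟨U, mem_nhdsWithin_of_mem_nhds haU, U, subset_rfl, hU⟩
  refine (hTU.union hM).congr fun x hx ↦ ?_
  rw [← inter_union_distrib_left, mem_inter_iff, iff_self_and]
  exact fun _ ↦ (le_or_gt x M).imp (fun hxM ↦ hU ⟨hx.le, hxM⟩) id

lemma eventuallyConst_nhdsGT_of_ordConnected {I : Set ℝ} (hI : I.OrdConnected) (a : ℝ) :
    EventuallyConst I (𝓝[>] a) := by
  rw [eventuallyConst_set, or_iff_not_imp_right, not_eventually]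
  intro hfreq
  obtain ⟨y, hy, hay⟩ := ((hfreq.mono fun _ ↦ not_not.1).and_eventually
    eventually_mem_nhdsWithin).exists
  filter_upwards [Ioo_mem_nhdsGT hay] with w hw
  obtain ⟨v, hv, hvw⟩ := (hfreq.and_eventually (Ioo_mem_nhdsGT hw.1)).exists
  exact hI.out (not_not.1 hv) hy ⟨hvw.2.le, hw.2.le⟩

lemma eventuallyConst_nhdsLT_of_ordConnected {I : Set ℝ} (hI : I.OrdConnected) (a : ℝ) :
    EventuallyConst I (𝓝[<] a) := by
  rw [eventuallyConst_set, or_iff_not_imp_right, not_eventually]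
  intro hfreq
  obtain ⟨y, hy, hay⟩ := ((hfreq.mono fun _ ↦ not_not.1).and_eventually
    eventually_mem_nhdsWithin).exists
  filter_upwards [Ioo_mem_nhdsLT hay] with w hw
  obtain ⟨v, hv, hvw⟩ := (hfreq.and_eventually (Ioo_mem_nhdsLT hw.2)).exists
  exact hI.out hy (not_not.1 hv) ⟨hw.1.le, hvw.1.le⟩

lemma eventuallyConst_atTop_of_ordConnected {I : Set ℝ} (hI : I.OrdConnected) :
    EventuallyConst I atTop := by
  rw [eventuallyConst_set, or_iff_not_imp_right, not_eventually]
  intro hfreq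
  obtain ⟨y, hy⟩ := hfreq.exists
  filter_upwards [eventually_ge_atTop y] with w hw
  obtain ⟨v, hv, hwv⟩ := (hfreq.and_eventually (eventually_ge_atTop w)).exists
  exact hI.out (not_not.1 hy) (not_not.1 hv) ⟨hw, hwv⟩

lemma eventuallyConst_setOf_mem_and_eq {α β : Type*} {l : Filter α} {I : Set α} {s : α → β}
    (hI : EventuallyConst I l) (hs : (∀ᶠ x in l, x ∈ I) → EventuallyConst s l) (σ : β) :
    EventuallyConst {x | x ∈ I ∧ s x = σ} l := by
  rcases eventuallyConst_set.1 hI with h | h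
  · exact hI.comp₂ And ((hs h).comp (· = σ))
  · exact eventuallyConst_set.2 (.inr (h.mono fun x hx hx' ↦ hx hx'.1))

lemma IsRootBranch.isGSA1_setOf_sign_eq {I : Set ℝ} {f : ℝ × ℝ →₀ ℝ} {ξ : ℝ → ℝ}
    (h : IsRootBranch I f ξ) (hI : I.OrdConnected) (g : ℝ × ℝ →₀ ℝ) (σ : SignType) :
    IsGSA1 {x | x ∈ I ∧ SignType.sign (signomial₂ g x (ξ x)) = σ} :=
  isGSA1_of_eventuallyConst
    (fun a ha ↦ eventuallyConst_setOf_mem_and_eq (eventuallyConst_nhdsGT_of_ordConnected hI a)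
      (h.eventuallyConst_sign_nhdsGT g ha) σ)
    (fun a ha ↦ eventuallyConst_setOf_mem_and_eq (eventuallyConst_nhdsLT_of_ordConnected hI a)
      (h.eventuallyConst_sign_nhdsLT g ha) σ)
    (eventuallyConst_setOf_mem_and_eq (eventuallyConst_atTop_of_ordConnected hI)
      (h.eventuallyConst_sign_atTop g) σ)

end Semialgebraic

section Thom

/-- Thom's ordering of lists of signs: the lists are compared at the last place where they differ,
in the direction given by the sign at the next place. -/
inductive ThomLT : List SignType → List SignType → Prop
  | pos {σ τ : SignType} {s : List SignType} :
      σ < τ → ThomLT (σ :: SignType.pos :: s) (τ :: SignType.pos :: s)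
  | neg {σ τ : SignType} {s : List SignType} :
      τ < σ → ThomLT (σ :: SignType.neg :: s) (τ :: SignType.neg :: s)
  | cons {σ τ : SignType} {s t : List SignType} : ThomLT s t → ThomLT (σ :: s) (τ :: t)

namespace ThomLT

lemma irrefl : ∀ s, ¬ThomLT s s
  | _ :: _ :: _, pos h => lt_irrefl _ h
  | _ :: _ :: _, neg h => lt_irrefl _ h
  | _ :: _, cons h => irrefl _ h

lemma asymm {s t : List SignType} (h : ThomLT s t) : ¬ThomLT t s := by
  induction h with
  | pos h => rintro (h' | h' | h'); exacts [h.asymm h', irrefl _ h']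
  | neg h => rintro (h' | h' | h'); exacts [h.asymm h', irrefl _ h']
  | cons h ih => rintro (h' | h' | h'); exacts [irrefl _ h, irrefl _ h, ih h']

end ThomLT

/-- A list of functions on `(0, ∞)` ending in `0`, in which each function is, up to powers of `y`,
the derivative of a power of `y` times its predecessor. -/
inductive IsThomSystem : List (ℝ → ℝ) → Prop
  | zero : IsThomSystem [0]
  | cons {F G : ℝ → ℝ} {L : List (ℝ → ℝ)} {b : ℝ} :
      (∀ y > 0, HasDerivAt (fun y ↦ y ^ (-b) * F y) (y ^ (-b - 1) * G y) y) →
      IsThomSystem (G :: L) → IsThomSystem (F :: G :: L)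

/-- The list of signs at `y` of the functions in `L`. -/
def signsAt (L : List (ℝ → ℝ)) (y : ℝ) : List SignType := L.map fun F ↦ SignType.sign (F y)

lemma monotoneOn_sign_of_hasDerivAt {b : ℝ} {F G : ℝ → ℝ}
    (hd : ∀ y > 0, HasDerivAt (fun y ↦ y ^ (-b) * F y) (y ^ (-b - 1) * G y) y) {y y' : ℝ}
    (hy : 0 < y) (hG : ∀ u ∈ Icc y y', 0 ≤ G u) :
    MonotoneOn (fun u ↦ SignType.sign (F u)) (Icc y y') := by
  have hpos : ∀ u ∈ Icc y y', 0 < u := fun u hu ↦ hy.trans_le hu.1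
  have hmono : MonotoneOn (fun u ↦ u ^ (-b) * F u) (Icc y y') := by
    refine monotoneOn_of_hasDerivWithinAt_nonneg (convex_Icc y y')
      (fun u hu ↦ (hd u (hpos u hu)).continuousAt.continuousWithinAt)
      (fun u hu ↦ (hd u (hpos u (interior_subset hu))).hasDerivWithinAt) fun u hu ↦ ?_
    have hu := interior_subset hu
    exact mul_nonneg (Real.rpow_nonneg (hpos u hu).le _) (hG u hu)
  refine (SignType.sign.monotone.comp_monotoneOn hmono).congr fun u hu ↦ ?_
  rw [Function.comp_apply, sign_mul, sign_pos (Real.rpow_pos_of_pos (hpos u hu) _), one_mul]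

lemma antitoneOn_sign_of_hasDerivAt {b : ℝ} {F G : ℝ → ℝ}
    (hd : ∀ y > 0, HasDerivAt (fun y ↦ y ^ (-b) * F y) (y ^ (-b - 1) * G y) y) {y y' : ℝ}
    (hy : 0 < y) (hG : ∀ u ∈ Icc y y', G u ≤ 0) :
    AntitoneOn (fun u ↦ SignType.sign (F u)) (Icc y y') := by
  have hmono := monotoneOn_sign_of_hasDerivAt (F := -F) (G := -G) (b := b)
    (fun y hy ↦ by simpa using (hd y hy).fun_neg) hy fun u hu ↦ neg_nonneg.2 (hG u hu)
  intro u hu v hv huv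
  simpa [Left.sign_neg] using hmono hu hv huv

namespace IsThomSystem

variable {F : ℝ → ℝ} {L : List (ℝ → ℝ)} {y y' : ℝ}

theorem signsAt_eq_or_thomLT (hL : IsThomSystem L) (hy : 0 < y) (hyy' : y < y') :
    (∀ u ∈ Icc y y', signsAt L u = signsAt L y) ∨ ThomLT (signsAt L y) (signsAt L y') := by
  induction hL with
  | zero => exact .inl fun u _ ↦ rfl
  | @cons F G L b hd _ ih =>
    refine ih.elim (fun hconst ↦ ?_) fun h ↦ .inr h.cons
    have hG : ∀ u ∈ Icc y y', SignType.sign (G u) = SignType.sign (G y) :=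
      fun u hu ↦ (List.cons.inj (hconst u hu)).1
    have hleft := left_mem_Icc.2 hyy'.le
    have hright := right_mem_Icc.2 hyy'.le
    have hcons (h : ∀ u ∈ Icc y y', SignType.sign (F u) = SignType.sign (F y)) :
        ∀ u ∈ Icc y y', signsAt (F :: G :: L) u = signsAt (F :: G :: L) y :=
      fun u hu ↦ congrArg₂ List.cons (h u hu) (hconst u hu)
    have hend : signsAt (F :: G :: L) y' =
        SignType.sign (F y') :: SignType.sign (G y) :: signsAt L y :=
      congrArg (List.cons _) (hconst y' hright)
    have hstart : signsAt (F :: G :: L) y =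
        SignType.sign (F y) :: SignType.sign (G y) :: signsAt L y := rfl
    have hmono (h : 0 ≤ G y) := monotoneOn_sign_of_hasDerivAt hd hy fun u hu ↦
      sign_nonneg_iff.1 ((hG u hu).symm ▸ sign_nonneg_iff.2 h)
    have hanti (h : G y ≤ 0) := antitoneOn_sign_of_hasDerivAt hd hy fun u hu ↦
      sign_nonpos_iff.1 ((hG u hu).symm ▸ sign_nonpos_iff.2 h)
    rcases lt_trichotomy (G y) 0 with h | h | h
    · refine (hanti h.le hleft hright hyy'.le).eq_or_lt.imp (fun heq ↦ hcons fun u hu ↦ ?_)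
        fun hlt ↦ ?_
      · exact (hanti h.le hleft hu hu.1).antisymm (heq.symm.trans_le (hanti h.le hu hright hu.2))
      · rw [hstart, hend, show SignType.sign (G y) = .neg from sign_neg h]
        exact .neg hlt
    · exact .inl <| hcons fun u hu ↦
        (hanti h.le hleft hu hu.1).antisymm (hmono h.ge hleft hu hu.1)
    · refine (hmono h.le hleft hright hyy'.le).eq_or_lt.imp (fun heq ↦ hcons fun u hu ↦ ?_)
        fun hlt ↦ ?_
      · exact le_antisymm ((hmono h.le hu hright hu.2).trans_eq heq.symm) (hmono h.le hleft hu hu.1)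
      · rw [hstart, hend, show SignType.sign (G y) = .pos from sign_pos h]
        exact .pos hlt

lemma thomLT_of_lt (hL : IsThomSystem (F :: L)) (hfin : {u | 0 < u ∧ F u = 0}.Finite) (hy : 0 < y)
    (hyy' : y < y') (h0 : F y = 0 ∨ F y' = 0) :
    ThomLT (signsAt (F :: L) y) (signsAt (F :: L) y') := by
  refine (hL.signsAt_eq_or_thomLT hy hyy').resolve_left fun hconst ↦ ?_
  have hsign : ∀ u ∈ Icc y y', SignType.sign (F u) = SignType.sign (F y) :=
    fun u hu ↦ (List.cons.inj (hconst u hu)).1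
  have hFy : F y = 0 := h0.elim id fun h ↦
    sign_eq_zero_iff.1 ((hsign y' (right_mem_Icc.2 hyy'.le)).symm.trans (by simp [h]))
  refine Icc_infinite hyy' (hfin.subset fun u hu ↦ ⟨hy.trans_le hu.1, ?_⟩)
  simpa [hFy] using hsign u hu

lemma thomLT_signsAt_iff (hL : IsThomSystem (F :: L)) (hfin : {u | 0 < u ∧ F u = 0}.Finite)
    (hy : 0 < y) (hy' : 0 < y') (h0 : F y = 0 ∨ F y' = 0) :
    ThomLT (signsAt (F :: L) y) (signsAt (F :: L) y') ↔ y < y' := by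
  refine ⟨fun h ↦ ?_, fun h ↦ hL.thomLT_of_lt hfin hy h h0⟩
  by_contra! hle
  rcases hle.eq_or_lt with rfl | hlt
  · exact ThomLT.irrefl _ h
  · exact h.asymm (hL.thomLT_of_lt hfin hy' hlt h0.symm)

end IsThomSystem

/-- The operator `f ↦ y ∂f/∂y - b f` on two-variable generalized polynomials; it removes the
monomials with exponent `b` in `y`. -/
def yEuler (b : ℝ) (f : ℝ × ℝ →₀ ℝ) : ℝ × ℝ →₀ ℝ :=
  .onFinset f.support (fun α ↦ (α.2 - b) * f α) fun _ h ↦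
    Finsupp.mem_support_iff.2 (right_ne_zero_of_mul h)

lemma hasDerivAt_rpow_mul_signomial₂ (f : ℝ × ℝ →₀ ℝ) (b x : ℝ) {y : ℝ} (hy : 0 < y) :
    HasDerivAt (fun y ↦ y ^ (-b) * signomial₂ f x y)
      (y ^ (-b - 1) * signomial₂ (yEuler b f) x y) y := by
  have hd : HasDerivAt (fun y ↦ ∑ α ∈ f.support, f α * x ^ α.1 * y ^ (α.2 - b))
      (∑ α ∈ f.support, f α * x ^ α.1 * ((α.2 - b) * y ^ (α.2 - b - 1))) y :=
    .fun_sum fun α _ ↦ (Real.hasDerivAt_rpow_const (.inl hy.ne')).const_mul _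
  have hval : y ^ (-b - 1) * signomial₂ (yEuler b f) x y =
      ∑ α ∈ f.support, f α * x ^ α.1 * ((α.2 - b) * y ^ (α.2 - b - 1)) := by
    unfold signomial₂ yEuler
    rw [Finsupp.onFinset_sum _ (by simp), Finset.mul_sum]
    refine Finset.sum_congr rfl fun α _ ↦ ?_
    rw [show α.2 - b - 1 = -b - 1 + α.2 by ring, Real.rpow_add hy]
    ring
  refine (hval ▸ hd).congr_of_eventuallyEq ?_
  filter_upwards [eventually_gt_nhds hy] with y hy
  rw [signomial₂, Finsupp.sum, Finset.mul_sum]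
  refine Finset.sum_congr rfl fun α _ ↦ ?_
  rw [sub_eq_neg_add, Real.rpow_add hy]
  ring

lemma card_support_yEuler_lt {f : ℝ × ℝ →₀ ℝ} {α : ℝ × ℝ} (hα : α ∈ f.support) :
    (yEuler α.2 f).support.card < f.support.card := by
  refine Finset.card_lt_card (Finset.ssubset_iff_of_subset Finsupp.support_onFinset_subset |>.2
    ⟨α, hα, ?_⟩)
  simp

lemma exists_isThomSystem_signomial₂ (f : ℝ × ℝ →₀ ℝ) :
    ∃ L, ∀ x, IsThomSystem ((f :: L).map fun g ↦ signomial₂ g x) := by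
  induction h : f.support.card using Nat.strong_induction_on generalizing f with
  | _ n ih =>
    rcases f.support.eq_empty_or_nonempty with hf | ⟨α, hα⟩
    · rw [Finsupp.support_eq_empty.1 hf]
      exact ⟨[], fun _ ↦ .zero⟩
    · obtain ⟨L, hL⟩ := ih _ (h ▸ card_support_yEuler_lt hα) (yEuler α.2 f) rfl
      exact ⟨yEuler α.2 f :: L, fun x ↦
        .cons (fun y hy ↦ hasDerivAt_rpow_mul_signomial₂ f α.2 x hy) (hL x)⟩

lemma isGSA2_setOf_map_eq {ι β : Type*} {Q : Set (ℝ × ℝ)} (hQ : IsGSA2 Q) {s : ι → ℝ × ℝ → β}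
    (hs : ∀ i b, IsGSA2 {q | q ∈ Q ∧ s i q = b}) (L : List ι) (t : List β) :
    IsGSA2 {q | q ∈ Q ∧ L.map (s · q) = t} := by
  induction L generalizing t with
  | nil =>
    cases t with
    | nil => simpa using hQ
    | cons => simpa using isGSA2_empty
  | cons i L ih =>
    cases t with
    | nil => simpa using isGSA2_empty
    | cons b t =>
      refine (congrArg IsGSA2 (ext fun q ↦ ?_)).mpr ((hs i b).inter (ih t))
      simp only [List.map_cons, List.cons.injEq, mem_inter_iff, mem_ofPred_eq]
      tauto

lemma isGSA2_setOf_rel {β γ : Type*} {Q : Set (ℝ × ℝ)} {s : ℝ × ℝ → β} {t : ℝ × ℝ → γ}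
    (hsfin : (range s).Finite) (htfin : (range t).Finite) (hs : ∀ b, IsGSA2 {q | q ∈ Q ∧ s q = b})
    (ht : ∀ c, IsGSA2 {q | q ∈ Q ∧ t q = c}) (R : β → γ → Prop) :
    IsGSA2 {q | q ∈ Q ∧ R (s q) (t q)} := by
  have := hsfin.to_subtype
  have := htfin.to_subtype
  refine (congrArg IsGSA2 (ext fun q ↦ ?_)).mpr (isGSA2_iUnion
    (ι := {p : range s × range t // R p.1 p.2}) fun p ↦ (hs p.1.1).inter (ht p.1.2))
  simp only [mem_iUnion, mem_inter_iff, mem_ofPred_eq]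
  constructor
  · exact fun ⟨hq, hR⟩ ↦ ⟨⟨(⟨s q, q, rfl⟩, ⟨t q, q, rfl⟩), hR⟩, ⟨hq, rfl⟩, hq, rfl⟩
  · rintro ⟨⟨p, hp⟩, ⟨hq, hsq⟩, -, htq⟩
    exact ⟨hq, by rwa [hsq, htq]⟩

lemma finite_range_map_list {ι β γ : Type*} [Finite β] (s : ι → γ → β) (L : List ι) :
    (range fun q ↦ L.map (s · q)).Finite :=
  (List.finite_length_eq β L.length).subset (by rintro _ ⟨q, rfl⟩; simp)

lemma isGSA1_of_ordConnected {I : Set ℝ} (hI : I.OrdConnected) : IsGSA1 I :=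
  isGSA1_of_eventuallyConst (fun a _ ↦ eventuallyConst_nhdsGT_of_ordConnected hI a)
    (fun a _ ↦ eventuallyConst_nhdsLT_of_ordConnected hI a)
    (eventuallyConst_atTop_of_ordConnected hI)

namespace IsRootBranch

variable {I : Set ℝ} {f : ℝ × ℝ →₀ ℝ} {ξ : ℝ → ℝ}

lemma isGSA2_setOf_rel_signs (h : IsRootBranch I f ξ) (hI : I.OrdConnected)
    (L : List (ℝ × ℝ →₀ ℝ)) (R : List SignType → List SignType → Prop) :
    IsGSA2 {q : ℝ × ℝ | (0 < q.1 ∧ 0 < q.2 ∧ q.1 ∈ I) ∧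
      R (L.map fun g ↦ SignType.sign (signomial₂ g q.1 (ξ q.1)))
        (L.map fun g ↦ SignType.sign (signomial₂ g q.1 q.2))} := by
  have hIGSA : IsGSA2 {q : ℝ × ℝ | 0 < q.1 ∧ 0 < q.2 ∧ q.1 ∈ I} := isGSA1_of_ordConnected hI
  refine isGSA2_setOf_rel (finite_range_map_list _ L) (finite_range_map_list _ L)
    (isGSA2_setOf_map_eq hIGSA (fun g σ ↦ ?_) L) (isGSA2_setOf_map_eq hIGSA (fun g σ ↦ ?_) L) R
  · simpa [IsGSA1, and_assoc] using h.isGSA1_setOf_sign_eq hI g σ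
  · refine (congrArg IsGSA2 (ext fun q ↦ ?_)).mpr
      (hIGSA.inter (isGSA2_setOf_sign_eq (isGenPoly2_signomial₂ g) σ))
    simp only [mem_inter_iff, mem_ofPred_eq]
    tauto

lemma thomLT_signs_iff (h : IsRootBranch I f ξ) {L : List (ℝ × ℝ →₀ ℝ)}
    (hL : ∀ x, IsThomSystem ((f :: L).map fun g ↦ signomial₂ g x)) {x y y' : ℝ} (hx : x ∈ I)
    (hy : 0 < y) (hy' : 0 < y') (h0 : y = ξ x ∨ y' = ξ x) :
    ThomLT ((f :: L).map fun g ↦ SignType.sign (signomial₂ g x y))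
      ((f :: L).map fun g ↦ SignType.sign (signomial₂ g x y')) ↔ y < y' := by
  have := (hL x).thomLT_signsAt_iff (h.finite x hx) hy hy'
    (h0.imp (by rintro rfl; exact h.root x hx) (by rintro rfl; exact h.root x hx))
  simpa [signsAt, Function.comp_def] using this

theorem isGSA2_setOf_lt (h : IsRootBranch I f ξ) (hI : I.OrdConnected) :
    IsGSA2 {q : ℝ × ℝ | q.1 ∈ I ∧ 0 < q.2 ∧ q.2 < ξ q.1} := by
  obtain ⟨L, hL⟩ := exists_isThomSystem_signomial₂ f
  refine (congrArg IsGSA2 (ext fun q ↦ ?_)).mpr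
    (h.isGSA2_setOf_rel_signs hI (f :: L) fun s t ↦ ThomLT t s)
  constructor
  · exact fun ⟨hq, hy, hlt⟩ ↦ ⟨⟨h.pos_of_mem _ hq, hy, hq⟩,
      (h.thomLT_signs_iff hL hq hy (h.pos _ hq) (.inr rfl)).2 hlt⟩
  · exact fun ⟨⟨_, hy, hq⟩, hlt⟩ ↦
      ⟨hq, hy, (h.thomLT_signs_iff hL hq hy (h.pos _ hq) (.inr rfl)).1 hlt⟩

theorem isGSA2_setOf_gt (h : IsRootBranch I f ξ) (hI : I.OrdConnected) :
    IsGSA2 {q : ℝ × ℝ | q.1 ∈ I ∧ ξ q.1 < q.2} := by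
  obtain ⟨L, hL⟩ := exists_isThomSystem_signomial₂ f
  refine (congrArg IsGSA2 (ext fun q ↦ ?_)).mpr
    (h.isGSA2_setOf_rel_signs hI (f :: L) ThomLT)
  constructor
  · intro ⟨hq, hlt⟩
    have hy := (h.pos _ hq).trans hlt
    exact ⟨⟨h.pos_of_mem _ hq, hy, hq⟩,
      (h.thomLT_signs_iff hL hq (h.pos _ hq) hy (.inl rfl)).2 hlt⟩
  · exact fun ⟨⟨_, hy, hq⟩, hlt⟩ ↦
      ⟨hq, (h.thomLT_signs_iff hL hq (h.pos _ hq) hy (.inl rfl)).1 hlt⟩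

end IsRootBranch

end Thom

section Cells

lemma isOpen_setOf_lt_snd {X : Type*} [TopologicalSpace X] {I : Set X} (hI : IsOpen I) {f : X → ℝ}
    (hf : ContinuousOn f I) : IsOpen {q : X × ℝ | q.1 ∈ I ∧ f q.1 < q.2} := by
  have := (continuousOn_snd.sub (hf.comp continuousOn_fst fun q hq ↦ hq.1)).isOpen_inter_preimage
    (hI.prod isOpen_univ) (isOpen_Ioi (a := 0))
  exact (congrArg IsOpen (ext fun q ↦ by simp)).mpr this

lemma isOpen_setOf_snd_lt {X : Type*} [TopologicalSpace X] {I : Set X} (hI : IsOpen I) {f : X → ℝ}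
    (hf : ContinuousOn f I) : IsOpen {q : X × ℝ | q.1 ∈ I ∧ q.2 < f q.1} := by
  have := (isOpen_setOf_lt_snd hI hf.neg).preimage
    (continuous_fst.prodMk continuous_snd.neg : Continuous fun q : X × ℝ ↦ (q.1, -q.2))
  simpa using this

lemma isPathConnected_setOf_lt_snd {X : Type*} [TopologicalSpace X] {I : Set X}
    (hI : IsPathConnected I) {f : X → ℝ} (hf : ContinuousOn f I) :
    IsPathConnected {q : X × ℝ | q.1 ∈ I ∧ f q.1 < q.2} := by
  have hφ : ContinuousOn (fun q : X × ℝ ↦ (q.1, f q.1 + q.2)) (I ×ˢ Ioi 0) :=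
    continuousOn_fst.prodMk
      ((hf.comp continuousOn_fst fun q hq ↦ hq.1).add continuousOn_snd)
  convert (hI.prod ((convex_Ioi (0 : ℝ)).isPathConnected nonempty_Ioi)).image' hφ using 1
  ext ⟨x, y⟩
  constructor
  · exact fun ⟨hx, hy⟩ ↦ ⟨(x, y - f x), ⟨hx, sub_pos.2 hy⟩, by simp⟩
  · rintro ⟨⟨x, t⟩, ⟨hx, ht⟩, ⟨⟩⟩
    exact ⟨hx, lt_add_of_pos_right _ ht⟩

lemma isPathConnected_setOf_lt_snd_lt {X : Type*} [TopologicalSpace X] {I : Set X}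
    (hI : IsPathConnected I) {f g : X → ℝ} (hf : ContinuousOn f I) (hg : ContinuousOn g I)
    (hfg : ∀ x ∈ I, f x < g x) :
    IsPathConnected {q : X × ℝ | q.1 ∈ I ∧ f q.1 < q.2 ∧ q.2 < g q.1} := by
  have hφ : ContinuousOn (fun q : X × ℝ ↦ (q.1, f q.1 + q.2 * (g q.1 - f q.1)))
      (I ×ˢ Ioo 0 1) := by
    have hf' := hf.comp continuousOn_fst fun (q : X × ℝ) (hq : q ∈ I ×ˢ Ioo 0 1) ↦ hq.1
    have hg' := hg.comp continuousOn_fst fun (q : X × ℝ) (hq : q ∈ I ×ˢ Ioo 0 1) ↦ hq.1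
    exact continuousOn_fst.prodMk (hf'.add (continuousOn_snd.mul (hg'.sub hf')))
  convert (hI.prod ((convex_Ioo (0 : ℝ) 1).isPathConnected (nonempty_Ioo.2 one_pos))).image' hφ
    using 1
  ext ⟨x, y⟩
  constructor
  · rintro ⟨hx, hfy, hyg⟩
    have hd : 0 < g x - f x := sub_pos.2 (hfg x hx)
    refine ⟨(x, (y - f x) / (g x - f x)), ⟨hx, div_pos (sub_pos.2 hfy) hd, ?_⟩, ?_⟩
    · exact (div_lt_one hd).2 (sub_lt_sub_right hyg _)
    · simp [div_mul_cancel₀ _ hd.ne']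
  · rintro ⟨⟨x, t⟩, ⟨hx, ht0, ht1⟩, ⟨⟩⟩
    have hd : 0 < g x - f x := sub_pos.2 (hfg x hx)
    exact ⟨hx, lt_add_of_pos_right _ (mul_pos ht0 hd), by
      simpa using add_lt_add_right (mul_lt_of_lt_one_left hd ht1) (f x)⟩

/-- The cell between the `k`-th and the `(k + 1)`-st of the functions `Ξ 0, …, Ξ sp` over `I`, where
the function above `Ξ sp` is taken to be `∞`. -/
def cell (I : Set ℝ) (sp : ℕ) (Ξ : ℕ → ℝ → ℝ) (k : ℕ) : Set (ℝ × ℝ) :=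
  {q | q.1 ∈ I ∧ Ξ k q.1 < q.2 ∧ (k = sp ∨ q.2 < Ξ (k + 1) q.1)}

lemma cell_self (I : Set ℝ) (sp : ℕ) (Ξ : ℕ → ℝ → ℝ) :
    cell I sp Ξ sp = {q | q.1 ∈ I ∧ Ξ sp q.1 < q.2} := by
  simp [cell]

lemma cell_of_lt (I : Set ℝ) {sp k : ℕ} (Ξ : ℕ → ℝ → ℝ) (hk : k < sp) :
    cell I sp Ξ k = {q | q.1 ∈ I ∧ Ξ k q.1 < q.2 ∧ q.2 < Ξ (k + 1) q.1} := by
  simp [cell, hk.ne]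

/-- Root branches `Ξ 1 < … < Ξ sp` over a common open interval `I`, together with `Ξ 0 = 0`. -/
structure IsBranchStack (I : Set ℝ) (sp : ℕ) (Ξ : ℕ → ℝ → ℝ) : Prop where
  isOpen : IsOpen I
  convex : Convex ℝ I
  nonempty : I.Nonempty
  pos_of_mem : ∀ x ∈ I, 0 < x
  zero : ∀ x, Ξ 0 x = 0
  lt : ∀ x ∈ I, ∀ k k', k < k' → k' ≤ sp → Ξ k x < Ξ k' x
  isRootBranch : ∀ k, 1 ≤ k → k ≤ sp → ∃ f, IsRootBranch I f (Ξ k)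

namespace IsBranchStack

variable {I : Set ℝ} {sp : ℕ} {Ξ : ℕ → ℝ → ℝ} {k k' : ℕ} {x y y' : ℝ}

lemma continuousOn (h : IsBranchStack I sp Ξ) (hk : k ≤ sp) : ContinuousOn (Ξ k) I := by
  rcases k.eq_zero_or_pos with rfl | hk0
  · exact continuousOn_const.congr fun x _ ↦ h.zero x
  · obtain ⟨f, hf⟩ := h.isRootBranch k hk0 hk
    exact hf.continuousOn

lemma le (h : IsBranchStack I sp Ξ) (hx : x ∈ I) (hkk' : k ≤ k') (hk' : k' ≤ sp) :
    Ξ k x ≤ Ξ k' x :=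
  hkk'.eq_or_lt.elim (fun hkk' ↦ hkk' ▸ le_rfl) fun hkk' ↦ (h.lt x hx k k' hkk' hk').le

lemma nonneg (h : IsBranchStack I sp Ξ) (hx : x ∈ I) (hk : k ≤ sp) : 0 ≤ Ξ k x :=
  h.zero x ▸ h.le hx k.zero_le hk

lemma isOpen_cell (h : IsBranchStack I sp Ξ) (hk : k ≤ sp) : IsOpen (cell I sp Ξ k) := by
  have hlow := isOpen_setOf_lt_snd h.isOpen (h.continuousOn hk)
  rcases hk.eq_or_lt with rfl | hlt
  · rwa [cell_self]
  · rw [cell_of_lt I Ξ hlt]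
    refine (congrArg IsOpen (ext fun q ↦ ?_)).mpr
      (hlow.inter (isOpen_setOf_snd_lt h.isOpen (h.continuousOn hlt)))
    simp only [mem_inter_iff, mem_ofPred_eq]
    tauto

lemma isPathConnected_cell (h : IsBranchStack I sp Ξ) (hk : k ≤ sp) :
    IsPathConnected (cell I sp Ξ k) := by
  have hI : IsPathConnected I := h.convex.isPathConnected h.nonempty
  rcases hk.eq_or_lt with rfl | hlt
  · rw [cell_self]
    exact isPathConnected_setOf_lt_snd hI (h.continuousOn hk)
  · rw [cell_of_lt I Ξ hlt]
    exact isPathConnected_setOf_lt_snd_lt hI (h.continuousOn hk) (h.continuousOn hlt)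
      fun x hx ↦ h.lt x hx k (k + 1) k.lt_succ_self hlt

lemma isGSA2_setOf_gt (h : IsBranchStack I sp Ξ) (hk : k ≤ sp) :
    IsGSA2 {q : ℝ × ℝ | q.1 ∈ I ∧ Ξ k q.1 < q.2} := by
  rcases k.eq_zero_or_pos with rfl | hk0
  · refine (congrArg IsGSA2 (ext fun q ↦ ?_)).mpr (isGSA1_of_ordConnected h.convex.ordConnected)
    have := h.pos_of_mem q.1
    simp only [mem_ofPred_eq, h.zero]
    tauto
  · obtain ⟨f, hf⟩ := h.isRootBranch k hk0 hk
    exact hf.isGSA2_setOf_gt h.convex.ordConnected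

lemma isGSA2_cell (h : IsBranchStack I sp Ξ) (hk : k ≤ sp) : IsGSA2 (cell I sp Ξ k) := by
  rcases hk.eq_or_lt with rfl | hlt
  · rw [cell_self]
    exact h.isGSA2_setOf_gt hk
  · obtain ⟨f, hf⟩ := h.isRootBranch (k + 1) k.succ_pos hlt
    rw [cell_of_lt I Ξ hlt]
    refine (congrArg IsGSA2 (ext fun q ↦ ?_)).mpr
      ((h.isGSA2_setOf_gt hk).inter (hf.isGSA2_setOf_lt h.convex.ordConnected))
    exact ⟨fun ⟨hq, hlow, hup⟩ ↦ ⟨⟨hq, hlow⟩, hq, (h.nonneg hq hk).trans_lt hlow, hup⟩,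
      fun ⟨⟨hq, hlow⟩, _, _, hup⟩ ↦ ⟨hq, hlow, hup⟩⟩

lemma lt_of_mem_cell (h : IsBranchStack I sp Ξ) (hkk' : k < k') (hk' : k' ≤ sp)
    (hy : (x, y) ∈ cell I sp Ξ k) (hy' : (x, y') ∈ cell I sp Ξ k') : y < y' := by
  rw [cell_of_lt I Ξ (hkk'.trans_le hk')] at hy
  exact hy.2.2.trans ((h.le hy.1 hkk' hk').trans_lt hy'.2.1)

lemma cell_inter_cell (h : IsBranchStack I sp Ξ) (hkk' : k < k') (hk' : k' ≤ sp) :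
    cell I sp Ξ k ∩ cell I sp Ξ k' = ∅ :=
  eq_empty_of_forall_notMem fun _ ⟨hq, hq'⟩ ↦ lt_irrefl _ (h.lt_of_mem_cell hkk' hk' hq hq')

lemma prod_Ioi_subset_closure_iUnion_cell (h : IsBranchStack I sp Ξ) :
    I ×ˢ Ioi 0 ⊆ closure (⋃ k ∈ Iic sp, cell I sp Ξ k) := by
  classical
  rintro ⟨x, y⟩ ⟨hx, hy⟩
  set k := Nat.findGreatest (fun k ↦ Ξ k x ≤ y) sp
  have hk : k ≤ sp := Nat.findGreatest_le sp
  have hky : Ξ k x ≤ y :=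
    Nat.findGreatest_spec (P := fun k ↦ Ξ k x ≤ y) sp.zero_le ((h.zero x).trans_le (le_of_lt hy))
  have hup : ∀ᶠ y' in 𝓝[>] y, k = sp ∨ y' < Ξ (k + 1) x := by
    rcases hk.eq_or_lt with hk | hk
    · exact .of_forall fun _ ↦ .inl hk
    · have : y < Ξ (k + 1) x := not_le.1 (Nat.findGreatest_is_greatest k.lt_succ_self hk)
      filter_upwards [nhdsWithin_le_nhds (Iio_mem_nhds this)] with y' hy' using .inr hy'
  have htends : Tendsto (fun y' ↦ (x, y')) (𝓝[>] y) (𝓝 (x, y)) :=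
    (Continuous.prodMk_right x).continuousAt.mono_left nhdsWithin_le_nhds
  refine mem_closure_of_tendsto htends ?_
  filter_upwards [hup, self_mem_nhdsWithin] with y' hup hyy'
  exact mem_biUnion (mem_Iic.2 hk) ⟨hx, hky.trans_lt hyy', hup⟩

end IsBranchStack

lemma exists_strictMono_of_trichotomy {X β ι : Type*} [LinearOrder β] [Finite ι] {I : Set X}
    (hI : I.Nonempty) {f : ι → X → β}
    (hf : ∀ i j, (∀ x ∈ I, f i x < f j x) ∨ (∀ x ∈ I, f i x = f j x) ∨ ∀ x ∈ I, f j x < f i x) :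
    ∃ (n : ℕ) (r : Fin n → ι), (∀ x ∈ I, StrictMono fun k ↦ f (r k) x) ∧
      ∀ i, ∃ k, EqOn (f i) (f (r k)) I := by
  obtain ⟨x₀, hx₀⟩ := hI
  have hlt i j (h : f i x₀ < f j x₀) : ∀ x ∈ I, f i x < f j x :=
    (hf i j).resolve_right <|
      not_or.2 ⟨fun h' ↦ h.ne (h' x₀ hx₀), fun h' ↦ h.asymm (h' x₀ hx₀)⟩
  have heq i j (h : f i x₀ = f j x₀) : EqOn (f i) (f j) I :=
    ((hf i j).resolve_left fun h' ↦ (h' x₀ hx₀).ne h).resolve_right fun h' ↦ (h' x₀ hx₀).ne' h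
  set V : Finset β := (finite_range fun i ↦ f i x₀).toFinset
  set e := V.orderEmbOfFin rfl
  have hr : ∀ k, ∃ i, f i x₀ = e k := fun k ↦
    (finite_range fun i ↦ f i x₀).mem_toFinset.1 (V.orderEmbOfFin_mem rfl k)
  choose r hr using hr
  refine ⟨V.card, r, fun x hx k k' hkk' ↦ hlt _ _ ?_ x hx, fun i ↦ ?_⟩
  · simpa only [hr] using e.strictMono hkk'
  · obtain ⟨k, hk⟩ : f i x₀ ∈ range e := by simp [e, V]
    exact ⟨k, heq _ _ (hk.symm.trans (hr k).symm)⟩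

lemma exists_stack_of_trichotomy {ι : Type*} [Finite ι] {I : Set ℝ} (hI : I.Nonempty)
    {f : ι → ℝ → ℝ} (hpos : ∀ i, ∀ x ∈ I, 0 < f i x)
    (hf : ∀ i j, (∀ x ∈ I, f i x < f j x) ∨ (∀ x ∈ I, f i x = f j x) ∨ ∀ x ∈ I, f j x < f i x) :
    ∃ (n : ℕ) (Ξ : ℕ → ℝ → ℝ), (∀ x, Ξ 0 x = 0) ∧ (∀ k, 1 ≤ k → k ≤ n → ∃ i, Ξ k = f i) ∧
      (∀ x ∈ I, ∀ k k', k < k' → k' ≤ n → Ξ k x < Ξ k' x) ∧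
      ∀ x ∈ I, ∀ y, (∃ i, y = f i x) ↔ ∃ k, 1 ≤ k ∧ k ≤ n ∧ y = Ξ k x := by
  obtain ⟨n, r, hr, hcover⟩ := exists_strictMono_of_trichotomy hI hf
  let Ξ : ℕ → ℝ → ℝ
    | 0 => 0
    | k + 1 => if hk : k < n then f (r ⟨k, hk⟩) else 0
  have hΞ (k : ℕ) (hk : k < n) : Ξ (k + 1) = f (r ⟨k, hk⟩) := dif_pos hk
  have hΞf (k : ℕ) (hk1 : 1 ≤ k) (hkn : k ≤ n) : ∃ i, Ξ k = f i := by
    obtain ⟨k, rfl⟩ := Nat.exists_eq_add_of_le' hk1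
    exact ⟨_, hΞ k hkn⟩
  refine ⟨n, Ξ, fun _ ↦ rfl, hΞf, fun x hx k k' hkk' hk' ↦ ?_, fun x hx y ↦ ⟨?_, ?_⟩⟩
  · obtain ⟨k', rfl⟩ := Nat.exists_eq_add_of_le' (Nat.one_le_of_lt hkk')
    rw [hΞ k' hk']
    cases k with
    | zero => exact hpos _ x hx
    | succ k =>
      rw [hΞ k (by omega)]
      exact hr x hx (Fin.mk_lt_mk.2 (Nat.lt_of_succ_lt_succ hkk'))
  · rintro ⟨i, rfl⟩
    obtain ⟨k, hk⟩ := hcover i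
    exact ⟨k + 1, k.val.succ_pos, k.isLt, by rw [hΞ k k.isLt, hk hx]⟩
  · rintro ⟨k, hk1, hkn, rfl⟩
    exact (hΞf k hk1 hkn).imp fun i hi ↦ congrFun hi x

end Cells

section Vstrip

variable {γ : ℕ → ℝ} {L p : ℕ}

lemma isOpen_vstrip : IsOpen (vstrip γ L p) := by
  unfold vstrip
  split_ifs
  exacts [isOpen_Ioi, isOpen_Ioo]

lemma convex_vstrip : Convex ℝ (vstrip γ L p) := by
  unfold vstrip
  split_ifs
  exacts [convex_Ioi _, convex_Ioo _ _]

lemma nonempty_vstrip (hγ : StrictMonoOn γ (Iic L)) (hp : p ≤ L) : (vstrip γ L p).Nonempty := by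
  unfold vstrip
  split_ifs with h
  · exact nonempty_Ioi
  · exact nonempty_Ioo.2 (hγ hp (Nat.lt_of_le_of_ne hp h) p.lt_succ_self)

lemma pos_of_mem_vstrip (hγ0 : γ 0 = 0) (hγ : StrictMonoOn γ (Iic L)) (hp : p ≤ L) :
    ∀ x ∈ vstrip γ L p, 0 < x := by
  have hγp : 0 ≤ γ p := hγ0 ▸ hγ.monotoneOn L.zero_le hp p.zero_le
  unfold vstrip
  split_ifs
  exacts [fun x hx ↦ hγp.trans_lt hx, fun x hx ↦ hγp.trans_lt hx.1]

end Vstrip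

lemma exists_isRootBranch {a : ℝ → ℝ → ℝ} (ha : IsGenPoly2 a) {I : Set ℝ} (hI : IsOpen I)
    (hIpos : ∀ x ∈ I, 0 < x) {s : ℕ} {ξ : ℕ → ℝ → ℝ}
    (hcont : ∀ j, 1 ≤ j → j ≤ s → ContinuousOn (ξ j) I)
    (hpos : ∀ j, 1 ≤ j → j ≤ s → ∀ x ∈ I, 0 < ξ j x)
    (hzero : ∀ x ∈ I, ∀ y, 0 < y → (a x y = 0 ↔ ∃ j, 1 ≤ j ∧ j ≤ s ∧ y = ξ j x)) :
    ∃ f, ∀ j, 1 ≤ j → j ≤ s → IsRootBranch I f (ξ j) := by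
  obtain ⟨f, hf⟩ := isGenPoly2_iff.1 ha
  refine ⟨f, fun j hj1 hjs ↦ ⟨hI, hIpos, hcont j hj1 hjs, hpos j hj1 hjs, fun x hx ↦ ?_,
    fun x hx ↦ ?_⟩⟩
  · have hy := hpos j hj1 hjs x hx
    rw [← hf x _ (hIpos x hx) hy]
    exact (hzero x hx _ hy).2 ⟨j, hj1, hjs, rfl⟩
  · refine ((finite_Icc 1 s).image (ξ · x)).subset fun y ⟨hy, hroot⟩ ↦ ?_
    rw [← hf x y (hIpos x hx) hy] at hroot
    obtain ⟨j, hj1, hjs, rfl⟩ := (hzero x hx y hy).1 hroot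
    exact mem_image_of_mem _ ⟨hj1, hjs⟩

end GenPoly

open GenPoly

/-- Merging the root functions on a fixed vertical half-strip: given a finite
family of nonzero generalized polynomial functions `a n` together with the
conclusions of the projection lemma on the strip `H p`, the union of their zero
sets in `H p` is the union of the graphs of continuous, monotonic, generalized
semialgebraic functions `0 =: Ξ 0 < Ξ 1 < … < Ξ sp ( < Ξ (sp+1) := ∞)`, and the
resulting cells `D k` (for `0 ≤ k ≤ sp`) are nonempty, pairwise disjoint, open,
pathwise connected, generalized semialgebraic, stacked in the `y`-direction, and
their union is a dense (open) subset of `H p`. -/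
theorem cell_decomposition_of_halfstrip (N : ℕ) (a : Fin N → ℝ → ℝ → ℝ)
    (hgen : ∀ n, IsGenPoly2 (a n))
    (hnz : ∀ n, ∃ x y : ℝ, 0 < x ∧ 0 < y ∧ a n x y ≠ 0)
    (L : ℕ) (γ : ℕ → ℝ) (hγ0 : γ 0 = 0) (hγmono : StrictMonoOn γ (Set.Iic L))
    (p : ℕ) (hp : p ≤ L)
    (s : Fin N → ℕ) (ξ : Fin N → ℕ → ℝ → ℝ)
    (hcont : ∀ n, ∀ j, 1 ≤ j → j ≤ s n → ContinuousOn (ξ n j) (vstrip γ L p))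
    (hmono : ∀ n, ∀ j, 1 ≤ j → j ≤ s n →
      MonotoneOn (ξ n j) (vstrip γ L p) ∨ AntitoneOn (ξ n j) (vstrip γ L p))
    (hgsa : ∀ n, ∀ j, 1 ≤ j → j ≤ s n →
      IsGSA2 {q : ℝ × ℝ | q.1 ∈ vstrip γ L p ∧ q.2 = ξ n j q.1})
    (hpos : ∀ n, ∀ j, 1 ≤ j → j ≤ s n → ∀ x ∈ vstrip γ L p, 0 < ξ n j x)
    (hord : ∀ n, ∀ j j', 1 ≤ j → j < j' → j' ≤ s n →
      ∀ x ∈ vstrip γ L p, ξ n j x < ξ n j' x)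
    (hzero : ∀ n, ∀ x ∈ vstrip γ L p, ∀ y : ℝ, 0 < y →
      (a n x y = 0 ↔ ∃ j, 1 ≤ j ∧ j ≤ s n ∧ y = ξ n j x))
    (htri : ∀ n₁ n₂, ∀ j₁ j₂, 1 ≤ j₁ → j₁ ≤ s n₁ → 1 ≤ j₂ → j₂ ≤ s n₂ →
      (∀ x ∈ vstrip γ L p, ξ n₁ j₁ x < ξ n₂ j₂ x) ∨
      (∀ x ∈ vstrip γ L p, ξ n₁ j₁ x = ξ n₂ j₂ x) ∨
      (∀ x ∈ vstrip γ L p, ξ n₂ j₂ x < ξ n₁ j₁ x)) :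
    ∃ (sp : ℕ) (Ξ : ℕ → ℝ → ℝ),
      (∀ x : ℝ, Ξ 0 x = 0) ∧
      (∀ k, 1 ≤ k → k ≤ sp → ContinuousOn (Ξ k) (vstrip γ L p)) ∧
      (∀ k, 1 ≤ k → k ≤ sp →
        MonotoneOn (Ξ k) (vstrip γ L p) ∨ AntitoneOn (Ξ k) (vstrip γ L p)) ∧
      (∀ k, 1 ≤ k → k ≤ sp →
        IsGSA2 {q : ℝ × ℝ | q.1 ∈ vstrip γ L p ∧ q.2 = Ξ k q.1}) ∧
      (∀ x ∈ vstrip γ L p, ∀ k k', k < k' → k' ≤ sp → Ξ k x < Ξ k' x) ∧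
      (∀ x ∈ vstrip γ L p, ∀ y : ℝ, 0 < y →
        ((∃ n, a n x y = 0) ↔ ∃ k, 1 ≤ k ∧ k ≤ sp ∧ y = Ξ k x)) ∧
      ∃ D : ℕ → Set (ℝ × ℝ),
        (∀ k ≤ sp, D k = {q : ℝ × ℝ | q.1 ∈ vstrip γ L p ∧ Ξ k q.1 < q.2 ∧
          (k = sp ∨ q.2 < Ξ (k + 1) q.1)}) ∧
        (∀ k ≤ sp, (D k).Nonempty) ∧
        (∀ k k', k < k' → k' ≤ sp → D k ∩ D k' = ∅) ∧
        (∀ k ≤ sp, IsOpen (D k)) ∧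
        (∀ k ≤ sp, IsPathConnected (D k)) ∧
        (∀ k ≤ sp, IsGSA2 (D k)) ∧
        (vstrip γ L p ×ˢ Set.Ioi (0 : ℝ) ⊆ closure (⋃ k ∈ Set.Iic sp, D k)) ∧
        (∀ x ∈ vstrip γ L p, ∀ yy : ℕ → ℝ, (∀ k ≤ sp, (x, yy k) ∈ D k) →
          ∀ k k', k < k' → k' ≤ sp → yy k < yy k') := by
  have hIpos := pos_of_mem_vstrip hγ0 hγmono hp
  have hI := isOpen_vstrip (γ := γ) (L := L) (p := p)
  choose f hf using fun n ↦ exists_isRootBranch (hgen n) hI hIpos (hcont n) (hpos n) (hzero n)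
  obtain ⟨sp, Ξ, hΞ0, hΞ, hΞlt, hgraph⟩ := exists_stack_of_trichotomy
    (ι := Σ n, Icc 1 (s n)) (f := fun i ↦ ξ i.1 i.2) (nonempty_vstrip hγmono hp)
    (fun i ↦ hpos i.1 i.2 i.2.2.1 i.2.2.2)
    fun i j ↦ htri i.1 j.1 i.2 j.2 i.2.2.1 i.2.2.2 j.2.2.1 j.2.2.2
  have hΞξ (P : (ℝ → ℝ) → Prop) (h : ∀ n j, 1 ≤ j → j ≤ s n → P (ξ n j)) (k : ℕ) (hk : 1 ≤ k)
      (hk' : k ≤ sp) : P (Ξ k) := by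
    obtain ⟨⟨n, j, hj, hj'⟩, hΞk⟩ := hΞ k hk hk'
    exact hΞk ▸ h n j hj hj'
  have hstack : IsBranchStack (vstrip γ L p) sp Ξ :=
    ⟨hI, convex_vstrip, nonempty_vstrip hγmono hp, hIpos, hΞ0, hΞlt,
      hΞξ (fun ζ ↦ ∃ f, IsRootBranch _ f ζ) fun n j hj hj' ↦ ⟨f n, hf n j hj hj'⟩⟩
  refine ⟨sp, Ξ, hΞ0, hΞξ (ContinuousOn · _) hcont,
    hΞξ (fun ζ ↦ MonotoneOn ζ _ ∨ AntitoneOn ζ _) hmono,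
    hΞξ (fun ζ ↦ IsGSA2 {q | q.1 ∈ vstrip γ L p ∧ q.2 = ζ q.1}) hgsa, hΞlt,
    fun x hx y hy ↦ by simp [← hgraph x hx y, hzero _ x hx y hy, and_assoc],
    cell _ sp Ξ, fun _ _ ↦ rfl, fun k hk ↦ (hstack.isPathConnected_cell hk).nonempty,
    fun k k' ↦ hstack.cell_inter_cell, fun k ↦ hstack.isOpen_cell,
    fun k ↦ hstack.isPathConnected_cell, fun k ↦ hstack.isGSA2_cell,
    hstack.prod_Ioi_subset_closure_iUnion_cell, fun x _ yy hyy k k' hkk' hk' ↦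
      hstack.lt_of_mem_cell hkk' hk' (hyy k (hkk'.le.trans hk')) (hyy k' hk')⟩
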